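/- arXiv:2206.00889 — 4 statements merged into one kernel-verified Lean document; each statement's English description precedes it below -/
import Mathlib

section
/- For every δ > 0 there is a threshold n₀ = n₀(δ) such that the following holds for all n ≥ n₀. Let A, B, C ⊆ ℝ² be mutually avoiding sets of n points each, and let T be the set of all collinear triples (a,b,c) with a ∈ A, b ∈ B, c ∈ C. If |T| ≥ δn², then T contains a tic-tac-toe configuration. -/
/-!
Identify `T` with a set of triples of integers by ordering each of `A`, `B`, `C`. Two facts about
`T` are used: two points of a triple determine the third, and, in suitable orders of the three
sets, no two triples are strictly comparable in all three coordinates (after passing to the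
triples whose middle point lies in one fixed set among `A`, `B`, `C`). The second fact,
`exists_orders`, comes from mutual avoidance: the points of one set see those of another set in a
common rotational order.

The combinatorial core is `exists_grid`. Cut `[0, n)³` into windows of constant side `k`.
By incomparability, only `O((n / k)²)` windows are hit by `T`, so a positive proportion
(in terms of `(n / k)²`) of windows contain at least `δ' k²` triples. The triangle removal lemma
(`exists_corner`, a Ruzsa–Szemerédi theorem) gives a corner `(x, y, z')`, `(x, y', z)`,
`(x', y, z)` in the pattern of each such window. By pigeonhole many windows have their corner at
the same position; the indices of these windows again form a dense system in which two
coordinates determine the third, so a second application of `exists_corner` yields three windows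
that are themselves arranged as a corner `(X, Y, Z')`, `(X, Y', Z)`, `(X', Y, Z)`. Six of the nine
triples obtained by combining the two corners form a tic-tac-toe configuration.
-/

/-- Points of the Euclidean plane. -/
abbrev Pt : Type := ℝ × ℝ

/-- The line through two points, as a set. -/
def lineThrough (p q : Pt) : Set Pt :=
  (affineSpan ℝ ({p, q} : Set Pt) : AffineSubspace ℝ Pt)

/-- Every line through two distinct points of `P` is disjoint from the convex hull of `Q`. -/
def AvoidsHull (P Q : Finset Pt) : Prop :=
  ∀ p ∈ P, ∀ q ∈ P, p ≠ q → Disjoint (lineThrough p q) (convexHull ℝ (Q : Set Pt))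

/-- Three finite point sets are mutually avoiding. -/
def MutuallyAvoiding (P Q S : Finset Pt) : Prop :=
  AvoidsHull P Q ∧ AvoidsHull P S ∧ AvoidsHull Q P ∧ AvoidsHull Q S ∧
    AvoidsHull S P ∧ AvoidsHull S Q

/-- A tic-tac-toe configuration in a set `T ⊆ A × B × C` of triples: nine pairwise distinct
points `p i j`, with `p i j` in `A`, `B`, `C` according as `i + j ≡ 0, 1, 2 (mod 3)`, such that
every row and every column gives (suitably ordered) a triple of `T`. -/
def IsTicTacToe (A B C : Finset Pt) (T : Set (Pt × Pt × Pt)) (p : Fin 3 → Fin 3 → Pt) : Prop :=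
  (∀ i j i' j' : Fin 3, p i j = p i' j' → i = i' ∧ j = j') ∧
  (∀ i j : Fin 3,
    (i + j = 0 → p i j ∈ A) ∧ (i + j = 1 → p i j ∈ B) ∧ (i + j = 2 → p i j ∈ C)) ∧
  (∀ i : Fin 3, (p i (0 - i), p i (1 - i), p i (2 - i)) ∈ T) ∧
  (∀ j : Fin 3, (p (0 - j) j, p (1 - j) j, p (2 - j) j) ∈ T)


open Finset SimpleGraph SimpleGraph.TripartiteFromTriangles

/-! ### Corners in linear triple systems -/

lemma card_le_sq {m : ℕ} {P : Finset (ℕ × ℕ × ℕ)}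
    (hm : ∀ t ∈ P, t.1 < m ∧ t.2.1 < m ∧ t.2.2 < m) (hP : ExplicitDisjoint P) :
    #P ≤ m ^ 2 := by
  have h : #P ≤ #(range m ×ˢ range m) := by
    refine card_le_card_of_injOn (fun t => (t.1, t.2.1)) ?_ ?_
    · intro t ht
      simpa using ⟨(hm t ht).1, (hm t ht).2.1⟩
    · rintro ⟨x, y, z⟩ h1 ⟨x', y', z'⟩ h2 h
      simp only [Prod.mk.injEq] at h
      obtain ⟨rfl, rfl⟩ := h
      rw [hP.inj₂ (mem_coe.1 h1) (mem_coe.1 h2)]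
  simpa [sq] using h

/-- Ruzsa–Szemerédi: a dense tripartite triple system in which two coordinates determine the third
(`ExplicitDisjoint`) contains a corner. Otherwise the graph formed by the triples would have only
`#P ≤ m²` triangles while being far from triangle-free, against the triangle removal lemma. -/
theorem exists_corner {ε : ℝ} (hε : 0 < ε) : ∃ N : ℕ, ∀ m : ℕ, N ≤ m →
    ∀ P : Finset (ℕ × ℕ × ℕ), (∀ t ∈ P, t.1 < m ∧ t.2.1 < m ∧ t.2.2 < m) →
      ExplicitDisjoint P → ε * (m : ℝ) ^ 2 ≤ #P →
      ∃ x y z x' y' z' : ℕ, x ≠ x' ∧ y ≠ y' ∧ z ≠ z' ∧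
        (x, y, z') ∈ P ∧ (x, y', z) ∈ P ∧ (x', y, z) ∈ P := by
  refine ⟨⌊(triangleRemovalBound (ε / 9) * 27)⁻¹⌋₊ + 1, fun m hm P hPm hP hcard => ?_⟩
  by_contra! hno
  have hpos : 0 < triangleRemovalBound (ε / 9) := triangleRemovalBound_pos (by positivity)
  let e : Fin m × Fin m × Fin m → ℕ × ℕ × ℕ := fun t => (t.1, t.2.1, t.2.2)
  have he : Function.Injective e := by
    rintro ⟨x, y, z⟩ ⟨x', y', z'⟩ h
    simp only [e, Prod.mk.injEq] at h
    ext <;> simp [h]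
  let t : Finset (Fin m × Fin m × Fin m) := P.preimage e he.injOn
  have htP : #t = #P := by
    rw [← card_image_of_injective t he]
    congr 1
    ext ⟨x, y, z⟩
    simp only [t, mem_image, mem_preimage]
    constructor
    · rintro ⟨u, hu, h⟩; rwa [← h]
    · intro h
      obtain ⟨h1, h2, h3⟩ := hPm _ h
      exact ⟨(⟨x, h1⟩, ⟨y, h2⟩, ⟨z, h3⟩), h, rfl⟩
  have hmt : ∀ {a b c : Fin m}, (a, b, c) ∈ t → ((a : ℕ), (b : ℕ), (c : ℕ)) ∈ P :=
    fun h => (mem_preimage (f := e) (hf := he.injOn)).1 h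
  have : ExplicitDisjoint t := by
    constructor
    · intro a b c a' h1 h2
      exact Fin.ext (hP.inj₀ (hmt h1) (hmt h2))
    · intro a b c a' h1 h2
      exact Fin.ext (hP.inj₁ (hmt h1) (hmt h2))
    · intro a b c a' h1 h2
      exact Fin.ext (hP.inj₂ (hmt h1) (hmt h2))
  have : NoAccidental t := by
    constructor
    intro a a' b b' c c' h1 h2 h3
    by_contra! hne
    exact hno a b c a' b' c' (fun h => hne.1 (Fin.ext h)) (fun h => hne.2.1 (Fin.ext h))
      (fun h => hne.2.2 (Fin.ext h)) (hmt h3) (hmt h2) (hmt h1)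
  have hfar : (graph t).FarFromTriangleFree (ε / 9) := by
    refine farFromTriangleFree _ ?_
    rw [htP]
    simp only [Fintype.card_fin]
    push_cast
    linarith
  have h1 := hfar.le_card_cliqueFinset
  rw [card_triangles, htP] at h1
  have h2 : (#P : ℝ) ≤ (m : ℝ) ^ 2 := mod_cast card_le_sq hPm hP
  have hm0 : (0 : ℝ) < m := by exact_mod_cast (by omega : 0 < m)
  rw [Nat.add_one_le_iff, Nat.floor_lt' (by omega), inv_lt_iff_one_lt_mul₀' (by positivity)] at hm
  have h3 : triangleRemovalBound (ε / 9) * 27 * m * m ^ 2 ≤ 1 * (m : ℝ) ^ 2 := by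
    refine le_trans (le_of_eq ?_) ((h1.trans h2).trans_eq (one_mul _).symm)
    simp only [Fintype.card_sum, Fintype.card_fin]
    push_cast
    ring
  have := le_of_mul_le_mul_right h3 (by positivity)
  linarith

/-! ### Windows and their patterns -/

/-- Each diagonal `{(x + s, y + s, z + s)}` contains at most one element of `H`, and the diagonals
are indexed by the differences `(x - z, y - z)`, shifted by `M` to stay within `ℕ`. -/
lemma card_antichain_le {M : ℕ} {H : Finset (ℕ × ℕ × ℕ)}
    (hM : ∀ t ∈ H, t.1 < M ∧ t.2.1 < M ∧ t.2.2 < M)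
    (hH : ∀ t ∈ H, ∀ t' ∈ H, ¬ (t.1 < t'.1 ∧ t.2.1 < t'.2.1 ∧ t.2.2 < t'.2.2)) :
    #H ≤ (2 * M) ^ 2 := by
  have h : #H ≤ #(range (2 * M) ×ˢ range (2 * M)) := by
    refine card_le_card_of_injOn (fun t => (t.1 + M - t.2.2, t.2.1 + M - t.2.2)) ?_ ?_
    · intro t ht
      have := hM t ht
      simp only [coe_product, coe_range, Set.mem_prod, Set.mem_Iio]
      omega
    · rintro ⟨x, y, z⟩ h1 ⟨x', y', z'⟩ h2 h
      have a1 := hM _ h1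
      have a2 := hM _ h2
      have a3 := hH _ h1 _ h2
      have a4 := hH _ h2 _ h1
      simp only [Prod.mk.injEq] at h a1 a2 a3 a4 ⊢
      omega
  simpa [sq] using h

/-- The index of the window of `[0, n)³`, of side `k`, that contains `t`. -/
def win (k : ℕ) (t : ℕ × ℕ × ℕ) : ℕ × ℕ × ℕ := (t.1 / k, t.2.1 / k, t.2.2 / k)

/-- The position of `t` inside its window of side `k`. -/
def pos (k : ℕ) (t : ℕ × ℕ × ℕ) : ℕ × ℕ × ℕ := (t.1 % k, t.2.1 % k, t.2.2 % k)

/-- The pattern of `T` in the window with index `w`, translated to the origin. -/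
def pattern (k : ℕ) (T : Finset (ℕ × ℕ × ℕ)) (w : ℕ × ℕ × ℕ) : Finset (ℕ × ℕ × ℕ) :=
  {t ∈ T | win k t = w}.image (pos k)

lemma mem_pattern {k : ℕ} (hk : 0 < k) {T : Finset (ℕ × ℕ × ℕ)} {w u : ℕ × ℕ × ℕ} :
    u ∈ pattern k T w ↔ (u.1 < k ∧ u.2.1 < k ∧ u.2.2 < k) ∧
      (k * w.1 + u.1, k * w.2.1 + u.2.1, k * w.2.2 + u.2.2) ∈ T := by
  obtain ⟨i, j, l⟩ := w
  obtain ⟨x, y, z⟩ := u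
  simp only [pattern, mem_image, mem_filter, win, pos, Prod.mk.injEq]
  constructor
  · rintro ⟨⟨a, b, c⟩, ⟨h, rfl, rfl, rfl⟩, rfl, rfl, rfl⟩
    simp only [Nat.div_add_mod]
    exact ⟨⟨Nat.mod_lt _ hk, Nat.mod_lt _ hk, Nat.mod_lt _ hk⟩, h⟩
  · rintro ⟨⟨h1, h2, h3⟩, h⟩
    refine ⟨_, ⟨h, ?_⟩, ?_⟩ <;>
    simp [Nat.mul_add_div hk, Nat.div_eq_of_lt, Nat.mod_eq_of_lt, *]

lemma card_pattern (k : ℕ) (T : Finset (ℕ × ℕ × ℕ)) (w : ℕ × ℕ × ℕ) :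
    #(pattern k T w) = #{t ∈ T | win k t = w} := by
  refine card_image_of_injOn ?_
  rintro ⟨a, b, c⟩ h ⟨a', b', c'⟩ h' hp
  simp only [coe_filter, Set.mem_ofPred_eq, win, pos, Prod.ext_iff] at h h' hp ⊢
  obtain ⟨-, h1, h2, h3⟩ := h
  obtain ⟨-, h1', h2', h3'⟩ := h'
  obtain ⟨p1, p2, p3⟩ := hp
  refine ⟨?_, ?_, ?_⟩
  · rw [← Nat.div_add_mod a k, ← Nat.div_add_mod a' k, p1, h1, h1']
  · rw [← Nat.div_add_mod b k, ← Nat.div_add_mod b' k, p2, h2, h2']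
  · rw [← Nat.div_add_mod c k, ← Nat.div_add_mod c' k, p3, h3, h3']

lemma explicitDisjoint_pattern {k : ℕ} (hk : 0 < k) {T : Finset (ℕ × ℕ × ℕ)}
    (hT : ExplicitDisjoint T) (w : ℕ × ℕ × ℕ) : ExplicitDisjoint (pattern k T w) := by
  constructor
  · intro a b c a' h h'
    rw [mem_pattern hk] at h h'
    exact Nat.add_left_cancel (hT.inj₀ h.2 h'.2)
  · intro a b c a' h h'
    rw [mem_pattern hk] at h h'
    exact Nat.add_left_cancel (hT.inj₁ h.2 h'.2)
  · intro a b c a' h hc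
    rw [mem_pattern hk] at h hc
    exact Nat.add_left_cancel (hT.inj₂ h.2 hc.2)

/-- A positive proportion of the windows are rich, that is, contain at least `δ / 32 * k ^ 2`
triples: at most `(2 * M) ^ 2` windows are hit at all, so the poor ones account for at most half
of `T`, and no window contains more than `k ^ 2` triples. -/
lemma card_rich_windows {δ : ℝ} (hδ : 0 < δ) {n k : ℕ} (hk : 0 < k) (hkn : k ≤ n)
    {T : Finset (ℕ × ℕ × ℕ)} (hn : ∀ t ∈ T, t.1 < n ∧ t.2.1 < n ∧ t.2.2 < n)
    (hT : ExplicitDisjoint T)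
    (hanti : ∀ t ∈ T, ∀ t' ∈ T, ¬ (t.1 < t'.1 ∧ t.2.1 < t'.2.1 ∧ t.2.2 < t'.2.2))
    (hcard : δ * (n : ℝ) ^ 2 ≤ #T) :
    δ / 8 * ((n / k + 1 : ℕ) : ℝ) ^ 2 ≤
      #{w ∈ T.image (win k) | δ / 32 * (k : ℝ) ^ 2 ≤ #(pattern k T w)} := by
  set M := n / k + 1 with hM
  set H := T.image (win k) with hH
  set G := {w ∈ H | δ / 32 * (k : ℝ) ^ 2 ≤ #(pattern k T w)} with hG
  have hHM : #H ≤ (2 * M) ^ 2 := by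
    refine card_antichain_le (M := M) ?_ ?_
    · intro w hw
      obtain ⟨t, ht, rfl⟩ := mem_image.1 hw
      obtain ⟨h1, h2, h3⟩ := hn t ht
      exact ⟨Nat.lt_succ_of_le (Nat.div_le_div_right h1.le),
        Nat.lt_succ_of_le (Nat.div_le_div_right h2.le),
        Nat.lt_succ_of_le (Nat.div_le_div_right h3.le)⟩
    · intro w hw w' hw' h
      obtain ⟨t, ht, rfl⟩ := mem_image.1 hw
      obtain ⟨t', ht', rfl⟩ := mem_image.1 hw'
      exact hanti t ht t' ht' ⟨lt_of_not_ge fun h' => h.1.not_ge (Nat.div_le_div_right h'),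
        lt_of_not_ge fun h' => h.2.1.not_ge (Nat.div_le_div_right h'),
        lt_of_not_ge fun h' => h.2.2.not_ge (Nat.div_le_div_right h')⟩
  have hsum : (#T : ℝ) = ∑ w ∈ H, (#(pattern k T w) : ℝ) := by
    rw [card_eq_sum_card_image (win k) T]
    simp only [card_pattern]
    push_cast
    rfl
  have hle : ∀ w ∈ H, (#(pattern k T w) : ℝ) ≤
      δ / 32 * (k : ℝ) ^ 2 + if δ / 32 * (k : ℝ) ^ 2 ≤ #(pattern k T w) then (k : ℝ) ^ 2 else 0 := by
    intro w _
    split_ifs with h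
    · have : (#(pattern k T w) : ℝ) ≤ (k : ℝ) ^ 2 := by
        exact_mod_cast card_le_sq (fun u hu => ((mem_pattern hk).1 hu).1)
          (explicitDisjoint_pattern hk hT w)
      have : 0 ≤ δ / 32 * (k : ℝ) ^ 2 := by positivity
      linarith
    · linarith
  have h1 : (#T : ℝ) ≤ #H * (δ / 32 * (k : ℝ) ^ 2) + #G * (k : ℝ) ^ 2 := by
    rw [hsum]
    refine (sum_le_sum hle).trans_eq ?_
    rw [sum_add_distrib, ← sum_filter, sum_const, sum_const, nsmul_eq_mul, nsmul_eq_mul]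
  have h2 : (#H : ℝ) ≤ 4 * (M : ℝ) ^ 2 := by
    have : (#H : ℝ) ≤ ((2 * M : ℕ) : ℝ) ^ 2 := by exact_mod_cast hHM
    push_cast at this
    linarith
  have hMk : (M : ℝ) * k ≤ 2 * n := by
    have h : M * k ≤ 2 * n := by
      have := Nat.div_mul_le_self n k
      rw [hM, add_mul]
      omega
    exact_mod_cast h
  have hk' : (0 : ℝ) < k := by exact_mod_cast hk
  have h3 : ((M : ℝ) * k) ^ 2 ≤ (2 * n) ^ 2 := by gcongr
  have h4 : #H * (δ / 32 * (k : ℝ) ^ 2) ≤ 4 * (M : ℝ) ^ 2 * (δ / 32 * (k : ℝ) ^ 2) := by gcongr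
  have h5 : δ * ((M : ℝ) * k) ^ 2 ≤ δ * (2 * n) ^ 2 := by gcongr
  have h6 : δ / 8 * (M : ℝ) ^ 2 * (k : ℝ) ^ 2 ≤ #G * (k : ℝ) ^ 2 := by
    nlinarith
  exact le_of_mul_le_mul_right h6 (by positivity)

/-- The combinatorial core: a dense system of integer triples in which two coordinates determine
the third and no two triples are strictly comparable contains the six triples of a tic-tac-toe
configuration. -/
theorem exists_grid {δ : ℝ} (hδ : 0 < δ) : ∃ n₀ : ℕ, ∀ n : ℕ, n₀ ≤ n →
    ∀ T : Finset (ℕ × ℕ × ℕ), (∀ t ∈ T, t.1 < n ∧ t.2.1 < n ∧ t.2.2 < n) →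
      ExplicitDisjoint T →
      (∀ t ∈ T, ∀ t' ∈ T, ¬ (t.1 < t'.1 ∧ t.2.1 < t'.2.1 ∧ t.2.2 < t'.2.2)) →
      δ * (n : ℝ) ^ 2 ≤ #T →
      ∃ a₁ a₂ a₃ b₁ b₂ b₃ c₁ c₂ c₃ : ℕ,
        (a₁ ≠ a₂ ∧ a₁ ≠ a₃ ∧ a₂ ≠ a₃) ∧ (b₁ ≠ b₂ ∧ b₁ ≠ b₃ ∧ b₂ ≠ b₃) ∧
        (c₁ ≠ c₂ ∧ c₁ ≠ c₃ ∧ c₂ ≠ c₃) ∧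
        (a₁, b₁, c₁) ∈ T ∧ (a₂, b₂, c₂) ∈ T ∧ (a₃, b₃, c₃) ∈ T ∧
        (a₁, b₂, c₃) ∈ T ∧ (a₃, b₁, c₂) ∈ T ∧ (a₂, b₃, c₁) ∈ T := by
  obtain ⟨K, hK⟩ := exists_corner (ε := δ / 32) (by positivity)
  set k := K + 1 with hk_def
  have hk : 0 < k := by omega
  have hk' : (0 : ℝ) < k := by exact_mod_cast hk
  obtain ⟨N, hN⟩ := exists_corner (ε := δ / 8 / (k : ℝ) ^ 6) (by positivity)
  refine ⟨k * (N + 1), fun n hn T hTn hT hanti hcard => ?_⟩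
  have hkn : k ≤ n := le_trans (Nat.le_mul_of_pos_right k (by omega)) hn
  set M := n / k + 1 with hM
  have hNM : N ≤ M := by
    have : N + 1 ≤ n / k := (Nat.le_div_iff_mul_le hk).2 (by rwa [mul_comm])
    omega
  set G := {w ∈ T.image (win k) | δ / 32 * (k : ℝ) ^ 2 ≤ #(pattern k T w)} with hG
  have hGcard : δ / 8 * (M : ℝ) ^ 2 ≤ #G := card_rich_windows hδ hk hkn hTn hT hanti hcard
  -- Each rich window contains a corner; `f` and `g` record its six coordinates.
  have hcorner : ∀ w : ℕ × ℕ × ℕ, ∃ u v : ℕ × ℕ × ℕ, w ∈ G →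
      u.1 ≠ v.1 ∧ u.2.1 ≠ v.2.1 ∧ u.2.2 ≠ v.2.2 ∧
        (u.1, u.2.1, v.2.2) ∈ pattern k T w ∧ (u.1, v.2.1, u.2.2) ∈ pattern k T w ∧
        (v.1, u.2.1, u.2.2) ∈ pattern k T w := by
    intro w
    by_cases hw : w ∈ G
    · obtain ⟨x, y, z, x', y', z', h⟩ := hK k (by omega) (pattern k T w)
        (fun u hu => ((mem_pattern hk).1 hu).1) (explicitDisjoint_pattern hk hT w)
        (mem_filter.1 hw).2
      exact ⟨(x, y, z), (x', y', z'), fun _ => h⟩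
    · exact ⟨0, 0, fun h => absurd h hw⟩
  choose f g hfg using hcorner
  let R := range k ×ˢ range k ×ˢ range k
  have hmaps : ∀ w ∈ G, (f w, g w) ∈ R ×ˢ R := by
    intro w hw
    obtain ⟨-, -, -, h1, h2, h3⟩ := hfg w hw
    have h1 := ((mem_pattern hk).1 h1).1
    have h2 := ((mem_pattern hk).1 h2).1
    have h3 := ((mem_pattern hk).1 h3).1
    simp only [R, mem_product, mem_range]
    simp only at h1 h2 h3
    omega
  obtain ⟨⟨u, v⟩, -, huv⟩ := exists_le_card_fiber_of_nsmul_le_card_of_maps_to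
    (b := δ / 8 / (k : ℝ) ^ 6 * (M : ℝ) ^ 2) hmaps
    (by simp [R, hk.ne']) (by
      refine le_trans (le_of_eq ?_) hGcard
      simp only [R, card_product, card_range, nsmul_eq_mul]
      push_cast
      field_simp)
  set G' := {w ∈ G | (f w, g w) = (u, v)} with hG'
  have key : ∀ w ∈ G', u.1 ≠ v.1 ∧ u.2.1 ≠ v.2.1 ∧ u.2.2 ≠ v.2.2 ∧
        (u.1, u.2.1, v.2.2) ∈ pattern k T w ∧ (u.1, v.2.1, u.2.2) ∈ pattern k T w ∧
        (v.1, u.2.1, u.2.2) ∈ pattern k T w := by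
    intro w hw
    obtain ⟨hwG, h⟩ := mem_filter.1 hw
    have hf : f w = u := congrArg Prod.fst h
    have hg : g w = v := congrArg Prod.snd h
    rw [← hf, ← hg]
    exact hfg w hwG
  have hGM : ∀ w ∈ G', w.1 < M ∧ w.2.1 < M ∧ w.2.2 < M := by
    intro w hw
    obtain ⟨t, ht, rfl⟩ := mem_image.1 (mem_filter.1 (mem_filter.1 hw).1).1
    obtain ⟨h1, h2, h3⟩ := hTn t ht
    exact ⟨Nat.lt_succ_of_le (Nat.div_le_div_right h1.le),
      Nat.lt_succ_of_le (Nat.div_le_div_right h2.le),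
      Nat.lt_succ_of_le (Nat.div_le_div_right h3.le)⟩
  -- All windows of `G'` have a triple at one and the same position, so `G'` inherits from `T`
  -- that two coordinates determine the third.
  have hdis : ExplicitDisjoint G' := by
    constructor
    · intro a b c a' h h'
      have h := ((mem_pattern hk).1 (key _ h).2.2.2.1).2
      have h' := ((mem_pattern hk).1 (key _ h').2.2.2.1).2
      exact Nat.eq_of_mul_eq_mul_left hk (Nat.add_right_cancel (hT.inj₀ h h'))
    · intro a b c a' h h'
      have h := ((mem_pattern hk).1 (key _ h).2.2.2.1).2
      have h' := ((mem_pattern hk).1 (key _ h').2.2.2.1).2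
      exact Nat.eq_of_mul_eq_mul_left hk (Nat.add_right_cancel (hT.inj₁ h h'))
    · intro a b c a' h h'
      have h := ((mem_pattern hk).1 (key _ h).2.2.2.1).2
      have h' := ((mem_pattern hk).1 (key _ h').2.2.2.1).2
      exact Nat.eq_of_mul_eq_mul_left hk (Nat.add_right_cancel (hT.inj₂ h h'))
  obtain ⟨X, Y, Z, X', Y', Z', hX, hY, hZ, h1, h2, h3⟩ := hN M hNM G' hGM hdis huv
  obtain ⟨hx, hy, hz, p1, p2, p3⟩ := key _ h1
  obtain ⟨-, -, -, q1, q2, q3⟩ := key _ h2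
  obtain ⟨-, -, -, r1, r2, r3⟩ := key _ h3
  rw [mem_pattern hk] at p1 p2 p3 q1 q2 q3 r1 r2 r3
  obtain ⟨x, y, z⟩ := u
  obtain ⟨x', y', z'⟩ := v
  simp only at hx hy hz p1 p2 p3 q1 q2 q3 r1 r2 r3
  -- Numbers in different windows are different.
  have hwin : ∀ {i j s t : ℕ}, i ≠ j → s < k → t < k → k * i + s ≠ k * j + t := by
    intro i j s t hij hs ht h
    apply hij
    have h' := congrArg (· / k) h
    simpa [Nat.mul_add_div hk, Nat.div_eq_of_lt hs, Nat.div_eq_of_lt ht] using h'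
  refine ⟨k * X + x, k * X + x', k * X' + x, k * Y + y', k * Y' + y, k * Y + y,
    k * Z' + z, k * Z + z, k * Z + z', ⟨by omega, hwin hX ?_ ?_, hwin hX ?_ ?_⟩,
    ⟨hwin hY ?_ ?_, by omega, hwin hY.symm ?_ ?_⟩,
    ⟨hwin hZ.symm ?_ ?_, hwin hZ.symm ?_ ?_, by omega⟩, p2.2, q3.2, r1.2, q1.2, r2.2, p3.2⟩ <;>
  omega

/-! ### Orders on mutually avoiding sets -/

/-- Twice the signed area of the triangle `p q r`: its sign is the orientation of the triple. -/
def orient (p q r : Pt) : ℝ := (q.1 - p.1) * (r.2 - p.2) - (q.2 - p.2) * (r.1 - p.1)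

lemma mem_lineThrough {p q x : Pt} (hpq : p ≠ q) (h : orient p q x = 0) :
    x ∈ lineThrough p q := by
  obtain ⟨p1, p2⟩ := p
  obtain ⟨q1, q2⟩ := q
  obtain ⟨x1, x2⟩ := x
  simp only [orient] at h
  have hd : 0 < (q1 - p1) ^ 2 + (q2 - p2) ^ 2 := by
    by_contra! hle
    have h1 : q1 - p1 = 0 := by nlinarith [sq_nonneg (q1 - p1), sq_nonneg (q2 - p2)]
    have h2 : q2 - p2 = 0 := by nlinarith [sq_nonneg (q1 - p1), sq_nonneg (q2 - p2)]
    exact hpq (by rw [sub_eq_zero.1 h1, sub_eq_zero.1 h2])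
  have hx : (x1, x2) = AffineMap.lineMap ((p1, p2) : Pt) ((q1, q2) : Pt)
      (((x1 - p1) * (q1 - p1) + (x2 - p2) * (q2 - p2)) / ((q1 - p1) ^ 2 + (q2 - p2) ^ 2)) := by
    rw [AffineMap.lineMap_apply, vsub_eq_sub, vadd_eq_add]
    ext <;> simp only [Prod.fst_add, Prod.snd_add, Prod.smul_fst, Prod.smul_snd, Prod.fst_sub,
      Prod.snd_sub, smul_eq_mul] <;> field_simp
    · linear_combination -(q2 - p2) * h
    · linear_combination (q1 - p1) * h
  rw [hx]
  exact AffineMap.lineMap_mem_affineSpan_pair _ _ _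

lemma orient_ne_zero {P Q : Finset Pt} (h : AvoidsHull P Q) {p p' x : Pt} (hp : p ∈ P)
    (hp' : p' ∈ P) (hne : p ≠ p') (hx : x ∈ convexHull ℝ (Q : Set Pt)) : orient p p' x ≠ 0 :=
  fun h0 => Set.disjoint_left.1 (h p hp p' hp' hne) (mem_lineThrough hne h0) hx

/-- All of `Q` lies on one side of a line spanned by `P`. -/
lemma orient_mul_pos {P Q : Finset Pt} (h : AvoidsHull P Q) {p p' q q' : Pt} (hp : p ∈ P)
    (hp' : p' ∈ P) (hne : p ≠ p') (hq : q ∈ Q) (hq' : q' ∈ Q) :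
    0 < orient p p' q * orient p p' q' := by
  by_contra! hle
  set d := orient p p' q with hd
  set d' := orient p p' q' with hd'
  have hd0 : d ≠ 0 := orient_ne_zero h hp hp' hne (subset_convexHull ℝ _ hq)
  have hs : 0 < d ^ 2 - d * d' := by have := sq_pos_of_ne_zero hd0; linarith
  -- `orient p p'` is affine and vanishes at the point `α • q + β • q'` of the segment `q q'`.
  obtain ⟨α, β, hα, hβ, hsum, hz⟩ :
      ∃ α β : ℝ, 0 ≤ α ∧ 0 ≤ β ∧ α + β = 1 ∧ α * d + β * d' = 0 := by
    refine ⟨-(d * d') / (d ^ 2 - d * d'), d ^ 2 / (d ^ 2 - d * d'),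
      div_nonneg (by linarith) hs.le, by positivity, ?_, ?_⟩
    · rw [← add_div, div_eq_one_iff_eq hs.ne']
      ring
    · rw [div_mul_eq_mul_div, div_mul_eq_mul_div, ← add_div, div_eq_zero_iff]
      left
      ring
  apply orient_ne_zero h hp hp' hne (convex_convexHull ℝ _ (subset_convexHull ℝ _ hq)
    (subset_convexHull ℝ _ hq') hα hβ hsum)
  rw [← hz, hd, hd', eq_sub_of_add_eq hsum]
  simp only [orient, Prod.fst_add, Prod.snd_add, Prod.smul_fst, Prod.smul_snd, smul_eq_mul]
  ring

lemma notMem_of_avoidsHull {P Q : Finset Pt} (h : AvoidsHull P Q) (hP : 1 < #P) {p : Pt}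
    (hp : p ∈ P) : p ∉ Q := by
  intro hq
  obtain ⟨p', hp', hne⟩ := exists_mem_ne hP p
  exact orient_ne_zero h hp hp' hne.symm (subset_convexHull ℝ _ hq) (by simp [orient])

/-- Points of `Q` see the points of `P` in a common rotational order, which is the order of a
real-valued function. -/
lemma exists_order {P Q : Finset Pt} (hPQ : AvoidsHull P Q) (hQP : AvoidsHull Q P)
    (hQ : 1 < #Q) : ∃ f : Pt → ℝ, Set.InjOn f P ∧
      ∀ p ∈ P, ∀ p' ∈ P, f p < f p' → ∀ q ∈ Q, 0 < orient p p' q := by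
  obtain ⟨q₀, h0, q₁, h1, hne⟩ := one_lt_card.1 hQ
  -- `p` is ordered by minus the cotangent of the angle at `q₀` between `q₁` and `p`; this
  -- cotangent is `num p / orient q₀ q₁ p`.
  let num : Pt → ℝ := fun p => (q₁.1 - q₀.1) * (p.1 - q₀.1) + (q₁.2 - q₀.2) * (p.2 - q₀.2)
  have hw : 0 < (q₁.1 - q₀.1) ^ 2 + (q₁.2 - q₀.2) ^ 2 := by
    by_contra! hle
    have e1 : q₁.1 - q₀.1 = 0 := by
      nlinarith [sq_nonneg (q₁.1 - q₀.1), sq_nonneg (q₁.2 - q₀.2)]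
    have e2 : q₁.2 - q₀.2 = 0 := by
      nlinarith [sq_nonneg (q₁.1 - q₀.1), sq_nonneg (q₁.2 - q₀.2)]
    exact hne (Prod.ext (sub_eq_zero.1 e1) (sub_eq_zero.1 e2)).symm
  have key : ∀ p ∈ P, ∀ p' ∈ P, -(num p' / orient q₀ q₁ p') - -(num p / orient q₀ q₁ p) =
      ((q₁.1 - q₀.1) ^ 2 + (q₁.2 - q₀.2) ^ 2) * orient p p' q₀ /
        (orient q₀ q₁ p * orient q₀ q₁ p') := by
    intro p hp p' hp'
    have n1 := orient_ne_zero hQP h0 h1 hne (subset_convexHull ℝ _ hp)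
    have n2 := orient_ne_zero hQP h0 h1 hne (subset_convexHull ℝ _ hp')
    field_simp
    simp only [num, orient]
    ring
  refine ⟨fun p => -(num p / orient q₀ q₁ p), ?_, ?_⟩
  · intro p hp p' hp' heq
    by_contra hpp
    have hk := key p hp p' hp'
    simp only at heq
    rw [heq, sub_self] at hk
    have hpos := orient_mul_pos hQP h0 h1 hne hp hp'
    have h2 := orient_ne_zero hPQ hp hp' hpp (subset_convexHull ℝ _ h0)
    exact (div_ne_zero (mul_ne_zero hw.ne' h2) hpos.ne') hk.symm
  · intro p hp p' hp' hlt q hq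
    have hpp : p ≠ p' := by rintro rfl; exact lt_irrefl _ hlt
    have hk := key p hp p' hp'
    have hpos := orient_mul_pos hQP h0 h1 hne hp hp'
    have h2 := sub_pos.2 hlt
    rw [hk, div_pos_iff_of_pos_right hpos] at h2
    exact pos_of_mul_pos_right (orient_mul_pos hPQ hp hp' hpp h0 hq)
      (pos_of_mul_pos_right h2 hw.le).le

/-- In suitable orders, two collinear triples of `P × Q × S` whose middle points lie in `Q` are
never strictly comparable: if `p < p'` and `s < s'`, then `p, s, s', p'` span a convex
quadrilateral, and since `q`, `q'` lie on the opposite sides `ps`, `p's'`, the comparison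
`q < q'` fails. -/
lemma exists_orders {P Q S : Finset Pt} (hPQ : AvoidsHull P Q) (hQP : AvoidsHull Q P)
    (hPS : AvoidsHull P S) (hSP : AvoidsHull S P) (hP : 1 < #P) (hS : 1 < #S) :
    ∃ f g h : Pt → ℝ, Set.InjOn f P ∧ Set.InjOn g Q ∧ Set.InjOn h S ∧
      ∀ p ∈ P, ∀ q ∈ Q, ∀ s ∈ S, ∀ p' ∈ P, ∀ q' ∈ Q, ∀ s' ∈ S,
        Wbtw ℝ p q s → Wbtw ℝ p' q' s' → ¬ (f p < f p' ∧ g q < g q' ∧ h s < h s') := by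
  obtain ⟨f, hf, hf'⟩ := exists_order hPS hSP hS
  obtain ⟨g, hg, hg'⟩ := exists_order hQP hPQ hP
  obtain ⟨h, hh, hh'⟩ := exists_order hSP hPS hP
  refine ⟨fun p => -f p, fun q => -g q, h, fun x hx y hy e => hf hx hy (neg_injective e),
    fun x hx y hy e => hg hx hy (neg_injective e), hh, ?_⟩
  rintro p hp q hq s hs p' hp' q' hq' s' hs' hw hw' ⟨h1, h2, h3⟩
  have hpq : p ≠ q := fun e => notMem_of_avoidsHull hPQ hP hp (e ▸ hq)
  have o1 : 0 < orient p s p' := by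
    have := hf' p' hp' p hp (neg_lt_neg_iff.1 h1) s hs
    simp only [orient] at this ⊢
    linarith
  have o2 : 0 < orient p s s' := by
    have := hh' s hs s' hs' h3 p hp
    simp only [orient] at this ⊢
    linarith
  have o3 : orient p q q' < 0 := by
    have := hg' q' hq' q hq (neg_lt_neg_iff.1 h2) p hp
    simp only [orient] at this ⊢
    linarith
  obtain ⟨r, ⟨hr0, hr1⟩, rfl⟩ := hw
  obtain ⟨r', ⟨hr0', hr1'⟩, rfl⟩ := hw'
  have e : orient p (AffineMap.lineMap p s r) (AffineMap.lineMap p' s' r') =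
      r * ((1 - r') * orient p s p' + r' * orient p s s') := by
    simp only [orient, AffineMap.lineMap_apply, vsub_eq_sub, vadd_eq_add, Prod.fst_add,
      Prod.snd_add, Prod.smul_fst, Prod.smul_snd, smul_eq_mul, Prod.fst_sub, Prod.snd_sub]
    ring
  rw [e] at o3
  have : 0 ≤ r * ((1 - r') * orient p s p' + r' * orient p s s') := by
    have : 0 ≤ 1 - r' := by linarith
    positivity
  linarith

lemma exists_rank {α : Type*} {A : Finset α} {f : α → ℝ} (hf : Set.InjOn f A) :
    ∃ r : α → ℕ, Set.InjOn r A ∧ (∀ a ∈ A, r a < #A) ∧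
      ∀ a a', r a < r a' → f a < f a' := by
  classical
  have hlt : ∀ a ∈ A, ∀ a', f a < f a' → #{x ∈ A | f x < f a} < #{x ∈ A | f x < f a'} := by
    intro a ha a' h
    refine card_lt_card ((ssubset_iff_of_subset ?_).2 ⟨a, by simp [ha, h], by simp⟩)
    intro x hx
    simp only [mem_filter] at hx ⊢
    exact ⟨hx.1, hx.2.trans h⟩
  refine ⟨fun a => #{x ∈ A | f x < f a}, ?_, ?_, ?_⟩
  · intro a ha a' ha' h
    rcases lt_trichotomy (f a) (f a') with hl | he | hl
    · exact absurd h (hlt a ha a' hl).ne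
    · exact hf ha ha' he
    · exact absurd h (hlt a' ha' a hl).ne'
  · intro a ha
    exact card_lt_card (filter_ssubset.2 ⟨a, ha, lt_irrefl _⟩)
  · intro a a' h
    by_contra! hle
    refine h.not_ge (card_le_card fun x hx => ?_)
    simp only [mem_filter] at hx ⊢
    exact ⟨hx.1, hx.2.trans_le hle⟩

/-! ### Transfer to the plane -/

/-- The transfer of `exists_grid` from integers to sets ordered by real-valued functions. -/
lemma exists_grid_of_orders {δ : ℝ} (hδ : 0 < δ) : ∃ n₀ : ℕ, ∀ n : ℕ, n₀ ≤ n →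
    ∀ A B C : Finset Pt, #A = n → #B = n → #C = n → ∀ T : Finset (Pt × Pt × Pt),
      (∀ t ∈ T, t.1 ∈ A ∧ t.2.1 ∈ B ∧ t.2.2 ∈ C) → ExplicitDisjoint T →
      ∀ f g h : Pt → ℝ, Set.InjOn f A → Set.InjOn g B → Set.InjOn h C →
      (∀ t ∈ T, ∀ t' ∈ T, ¬ (f t.1 < f t'.1 ∧ g t.2.1 < g t'.2.1 ∧ h t.2.2 < h t'.2.2)) →
      δ * (n : ℝ) ^ 2 ≤ #T →
      ∃ a₁ a₂ a₃ b₁ b₂ b₃ c₁ c₂ c₃ : Pt,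
        (a₁ ≠ a₂ ∧ a₁ ≠ a₃ ∧ a₂ ≠ a₃) ∧ (b₁ ≠ b₂ ∧ b₁ ≠ b₃ ∧ b₂ ≠ b₃) ∧
        (c₁ ≠ c₂ ∧ c₁ ≠ c₃ ∧ c₂ ≠ c₃) ∧
        (a₁, b₁, c₁) ∈ T ∧ (a₂, b₂, c₂) ∈ T ∧ (a₃, b₃, c₃) ∈ T ∧
        (a₁, b₂, c₃) ∈ T ∧ (a₃, b₁, c₂) ∈ T ∧ (a₂, b₃, c₁) ∈ T := by
  obtain ⟨n₀, hn₀⟩ := exists_grid hδ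
  refine ⟨n₀, fun n hn A B C hA hB hC T hT hdis f g h hf hg hh hanti hcard => ?_⟩
  obtain ⟨r, hr, hrn, hrf⟩ := exists_rank hf
  obtain ⟨s, hs, hsn, hsg⟩ := exists_rank hg
  obtain ⟨q, hq, hqn, hqh⟩ := exists_rank hh
  classical
  let φ : Pt × Pt × Pt → ℕ × ℕ × ℕ := fun t => (r t.1, s t.2.1, q t.2.2)
  have hφ : Set.InjOn φ T := by
    intro t ht t' ht' e
    simp only [φ, Prod.mk.injEq] at e
    obtain ⟨h1, h2, h3⟩ := hT t ht
    obtain ⟨h1', h2', h3'⟩ := hT t' ht'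
    exact Prod.ext (hr h1 h1' e.1) (Prod.ext (hs h2 h2' e.2.1) (hq h3 h3' e.2.2))
  -- Left inverses of the three rank functions.
  let R := Function.invFunOn r A
  let S := Function.invFunOn s B
  let Q := Function.invFunOn q C
  have hback : ∀ {x y z : ℕ}, (x, y, z) ∈ T.image φ →
      (R x, S y, Q z) ∈ T ∧ r (R x) = x ∧ s (S y) = y ∧ q (Q z) = z := by
    intro x y z hx
    obtain ⟨t, ht, e⟩ := mem_image.1 hx
    simp only [φ, Prod.mk.injEq] at e
    obtain ⟨rfl, rfl, rfl⟩ := e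
    obtain ⟨h1, h2, h3⟩ := hT t ht
    have e1 : R (r t.1) = t.1 := hr.leftInvOn_invFunOn h1
    have e2 : S (s t.2.1) = t.2.1 := hs.leftInvOn_invFunOn h2
    have e3 : Q (q t.2.2) = t.2.2 := hq.leftInvOn_invFunOn h3
    rw [e1, e2, e3]
    exact ⟨ht, rfl, rfl, rfl⟩
  obtain ⟨a₁, a₂, a₃, b₁, b₂, b₃, c₁, c₂, c₃, ha, hb, hc, t1, t2, t3, t4, t5, t6⟩ :=
    hn₀ n hn (T.image φ)
      (by
        intro x hx
        obtain ⟨t, ht, rfl⟩ := mem_image.1 hx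
        obtain ⟨h1, h2, h3⟩ := hT t ht
        exact ⟨hA ▸ hrn _ h1, hB ▸ hsn _ h2, hC ▸ hqn _ h3⟩)
      (by
        constructor
        · intro x y z x' h1 h2
          obtain ⟨h1, e1, -, -⟩ := hback h1
          obtain ⟨h2, e2, -, -⟩ := hback h2
          rw [← e1, ← e2, hdis.inj₀ h1 h2]
        · intro x y z x' h1 h2
          obtain ⟨h1, -, e1, -⟩ := hback h1
          obtain ⟨h2, -, e2, -⟩ := hback h2
          rw [← e1, ← e2, hdis.inj₁ h1 h2]
        · intro x y z x' h1 h2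
          obtain ⟨h1, -, -, e1⟩ := hback h1
          obtain ⟨h2, -, -, e2⟩ := hback h2
          rw [← e1, ← e2, hdis.inj₂ h1 h2])
      (by
        intro x hx x' hx' hlt
        obtain ⟨t, ht, rfl⟩ := mem_image.1 hx
        obtain ⟨t', ht', rfl⟩ := mem_image.1 hx'
        exact hanti t ht t' ht' ⟨hrf _ _ hlt.1, hsg _ _ hlt.2.1, hqh _ _ hlt.2.2⟩)
      (by rwa [card_image_of_injOn hφ])
  obtain ⟨m1, i1, j1, l1⟩ := hback t1
  obtain ⟨m2, i2, j2, l2⟩ := hback t2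
  obtain ⟨m3, i3, j3, l3⟩ := hback t3
  refine ⟨R a₁, R a₂, R a₃, S b₁, S b₂, S b₃, Q c₁, Q c₂, Q c₃, ⟨?_, ?_, ?_⟩, ⟨?_, ?_, ?_⟩,
    ⟨?_, ?_, ?_⟩, m1, m2, m3, (hback t4).1, (hback t5).1, (hback t6).1⟩
  · exact fun e => ha.1 (by rw [← i1, ← i2, e])
  · exact fun e => ha.2.1 (by rw [← i1, ← i3, e])
  · exact fun e => ha.2.2 (by rw [← i2, ← i3, e])
  · exact fun e => hb.1 (by rw [← j1, ← j2, e])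
  · exact fun e => hb.2.1 (by rw [← j1, ← j3, e])
  · exact fun e => hb.2.2 (by rw [← j2, ← j3, e])
  · exact fun e => hc.1 (by rw [← l1, ← l2, e])
  · exact fun e => hc.2.1 (by rw [← l1, ← l3, e])
  · exact fun e => hc.2.2 (by rw [← l2, ← l3, e])

/-- A line through points of two of the sets contains at most one point of the third. -/
lemma eq_of_collinear {P Q S : Finset Pt} (hPQ : AvoidsHull P Q) (hSP : AvoidsHull S P)
    (hP : 1 < #P) {p q s s' : Pt} (hp : p ∈ P) (hq : q ∈ Q) (hs : s ∈ S) (hs' : s' ∈ S)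
    (h : Collinear ℝ {p, q, s}) (h' : Collinear ℝ {p, q, s'}) : s = s' := by
  by_contra hne
  have hpq : p ≠ q := fun e => notMem_of_avoidsHull hPQ hP hp (e ▸ hq)
  have h4 : Collinear ℝ ({s, s', p, q} : Set Pt) := by
    refine collinear_insert_insert_of_mem_affineSpan_pair ?_ ?_
    · refine h.mem_affineSpan_of_mem_of_ne (p₁ := p) (p₂ := q) ?_ ?_ ?_ hpq <;> simp
    · refine h'.mem_affineSpan_of_mem_of_ne (p₁ := p) (p₂ := q) ?_ ?_ ?_ hpq <;> simp
  refine Set.disjoint_left.1 (hSP s hs s' hs' hne) ?_ (subset_convexHull ℝ _ hp)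
  refine h4.mem_affineSpan_of_mem_of_ne (p₁ := s) (p₂ := s') ?_ ?_ ?_ hne <;> simp

/-- For every `δ > 0` there is `n₀` such that for all `n ≥ n₀`, if `A, B, C`
are mutually avoiding `n`-point sets and `T` is the set of all collinear triples
`(a,b,c) ∈ A × B × C` with `|T| ≥ δ n²`, then `T` contains a tic-tac-toe configuration. -/
theorem statement0 :
    ∀ δ : ℝ, 0 < δ → ∃ n₀ : ℕ, ∀ n : ℕ, n₀ ≤ n →
      ∀ A B C : Finset Pt, A.card = n → B.card = n → C.card = n →
        MutuallyAvoiding A B C →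
        ∀ T : Finset (Pt × Pt × Pt),
          (∀ t : Pt × Pt × Pt,
            t ∈ T ↔ t.1 ∈ A ∧ t.2.1 ∈ B ∧ t.2.2 ∈ C ∧ Collinear ℝ {t.1, t.2.1, t.2.2}) →
          δ * (n : ℝ) ^ 2 ≤ (T.card : ℝ) →
          ∃ p : Fin 3 → Fin 3 → Pt, IsTicTacToe A B C (T : Set (Pt × Pt × Pt)) p := by
  intro δ hδ
  obtain ⟨n₀, hn₀⟩ := exists_grid_of_orders (δ := δ / 3) (by positivity)
  refine ⟨max n₀ 2, fun n hn A B C hA hB hC hav T hT hcard => ?_⟩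
  obtain ⟨hAB, hAC, hBA, hBC, hCA, hCB⟩ := hav
  have hn2 : 1 < n := lt_of_lt_of_le (by norm_num) ((le_max_right n₀ 2).trans hn)
  have hA1 : 1 < #A := hA ▸ hn2
  have hB1 : 1 < #B := hB ▸ hn2
  have hC1 : 1 < #C := hC ▸ hn2
  have hmem : ∀ t ∈ T, t.1 ∈ A ∧ t.2.1 ∈ B ∧ t.2.2 ∈ C := fun t ht =>
    ⟨((hT t).1 ht).1, ((hT t).1 ht).2.1, ((hT t).1 ht).2.2.1⟩
  have hdis : ∀ T' ⊆ T, ExplicitDisjoint T' := by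
    intro T' hT'
    constructor
    · intro a b c a' h h'
      obtain ⟨h1, h2, h3, h4⟩ := (hT _).1 (hT' h)
      obtain ⟨h1', -, -, h4'⟩ := (hT _).1 (hT' h')
      refine eq_of_collinear hBC hAB hB1 h2 h3 h1 h1' ?_ ?_
      · convert! h4 using 1; grind
      · convert! h4' using 1; grind
    · intro a b c b' h h'
      obtain ⟨h1, h2, h3, h4⟩ := (hT _).1 (hT' h)
      obtain ⟨-, h2', -, h4'⟩ := (hT _).1 (hT' h')
      refine eq_of_collinear hCA hBC hC1 h3 h1 h2 h2' ?_ ?_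
      · convert! h4 using 1; grind
      · convert! h4' using 1; grind
    · intro a b c c' h h'
      obtain ⟨h1, h2, h3, h4⟩ := (hT _).1 (hT' h)
      obtain ⟨-, -, h3', h4'⟩ := (hT _).1 (hT' h')
      exact eq_of_collinear hAB hCA hA1 h1 h2 h3 h3' h4 h4'
  classical
  -- The triples are split according to which of their points lies in the middle.
  let T₁ := {t ∈ T | Wbtw ℝ t.1 t.2.1 t.2.2}
  let T₂ := {t ∈ T | Wbtw ℝ t.2.1 t.2.2 t.1}
  let T₃ := {t ∈ T | Wbtw ℝ t.2.2 t.1 t.2.1}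
  have hcover : T ⊆ T₁ ∪ T₂ ∪ T₃ := by
    intro t ht
    have := ((hT t).1 ht).2.2.2.wbtw_or_wbtw_or_wbtw
    simp only [T₁, T₂, T₃, mem_union, mem_filter]
    tauto
  have hsum : #T ≤ #T₁ + #T₂ + #T₃ :=
    (card_le_card hcover).trans ((card_union_le _ _).trans (by gcongr; exact card_union_le _ _))
  have hsum' : (#T : ℝ) ≤ #T₁ + #T₂ + #T₃ := by exact_mod_cast hsum
  have hgood : ∃ T' ⊆ T, δ / 3 * (n : ℝ) ^ 2 ≤ #T' ∧ ∃ f g h : Pt → ℝ,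
      Set.InjOn f A ∧ Set.InjOn g B ∧ Set.InjOn h C ∧ ∀ t ∈ T', ∀ t' ∈ T',
        ¬ (f t.1 < f t'.1 ∧ g t.2.1 < g t'.2.1 ∧ h t.2.2 < h t'.2.2) := by
    by_cases h1 : δ / 3 * (n : ℝ) ^ 2 ≤ #T₁
    · obtain ⟨f, g, h, hf, hg, hh, H⟩ := exists_orders hAB hBA hAC hCA hA1 hC1
      refine ⟨T₁, filter_subset _ _, h1, f, g, h, hf, hg, hh, fun t ht t' ht' hlt => ?_⟩
      obtain ⟨ht, hw⟩ := mem_filter.1 ht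
      obtain ⟨ht', hw'⟩ := mem_filter.1 ht'
      obtain ⟨a, b, c⟩ := hmem t ht
      obtain ⟨a', b', c'⟩ := hmem t' ht'
      exact H _ a _ b _ c _ a' _ b' _ c' hw hw' hlt
    by_cases h2 : δ / 3 * (n : ℝ) ^ 2 ≤ #T₂
    · obtain ⟨g, h, f, hg, hh, hf, H⟩ := exists_orders hBC hCB hBA hAB hB1 hA1
      refine ⟨T₂, filter_subset _ _, h2, f, g, h, hf, hg, hh, fun t ht t' ht' hlt => ?_⟩
      obtain ⟨ht, hw⟩ := mem_filter.1 ht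
      obtain ⟨ht', hw'⟩ := mem_filter.1 ht'
      obtain ⟨a, b, c⟩ := hmem t ht
      obtain ⟨a', b', c'⟩ := hmem t' ht'
      exact H _ b _ c _ a _ b' _ c' _ a' hw hw' ⟨hlt.2.1, hlt.2.2, hlt.1⟩
    · obtain ⟨h, f, g, hh, hf, hg, H⟩ := exists_orders hCA hAC hCB hBC hC1 hB1
      refine ⟨T₃, filter_subset _ _, by linarith, f, g, h, hf, hg, hh,
        fun t ht t' ht' hlt => ?_⟩
      obtain ⟨ht, hw⟩ := mem_filter.1 ht
      obtain ⟨ht', hw'⟩ := mem_filter.1 ht'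
      obtain ⟨a, b, c⟩ := hmem t ht
      obtain ⟨a', b', c'⟩ := hmem t' ht'
      exact H _ c _ a _ b _ c' _ a' _ b' hw hw' ⟨hlt.2.2, hlt.1, hlt.2.1⟩
  obtain ⟨T', hT', hcard', f, g, h, hf, hg, hh, hanti⟩ := hgood
  obtain ⟨a₁, a₂, a₃, b₁, b₂, b₃, c₁, c₂, c₃, ha, hb, hc, t1, t2, t3, t4, t5, t6⟩ :=
    hn₀ n ((le_max_left _ _).trans hn) A B C hA hB hC T' (fun t ht => hmem t (hT' ht))
      (hdis T' hT') f g h hf hg hh hanti hcard'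
  obtain ⟨ma1, mb1, mc1⟩ := hmem _ (hT' t1)
  obtain ⟨ma2, mb2, mc2⟩ := hmem _ (hT' t2)
  obtain ⟨ma3, mb3, mc3⟩ := hmem _ (hT' t3)
  have dAB : ∀ {x y : Pt}, x ∈ A → y ∈ B → x ≠ y := fun hx hy e =>
    notMem_of_avoidsHull hAB hA1 hx (e ▸ hy)
  have dAC : ∀ {x y : Pt}, x ∈ A → y ∈ C → x ≠ y := fun hx hy e =>
    notMem_of_avoidsHull hAC hA1 hx (e ▸ hy)
  have dBC : ∀ {x y : Pt}, x ∈ B → y ∈ C → x ≠ y := fun hx hy e =>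
    notMem_of_avoidsHull hBC hB1 hx (e ▸ hy)
  refine ⟨![![a₁, b₁, c₁], ![b₂, c₂, a₂], ![c₃, a₃, b₃]], ?_, ?_, ?_, ?_⟩
  · intro i j i' j' hij
    fin_cases i <;> fin_cases j <;> fin_cases i' <;> fin_cases j' <;>
      first
      | exact ⟨rfl, rfl⟩
      | (exfalso
         first
         | exact ha.1 hij | exact ha.2.1 hij | exact ha.2.2 hij
         | exact hb.1 hij | exact hb.2.1 hij | exact hb.2.2 hij
         | exact hc.1 hij | exact hc.2.1 hij | exact hc.2.2 hij
         | exact ha.1 hij.symm | exact ha.2.1 hij.symm | exact ha.2.2 hij.symm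
         | exact hb.1 hij.symm | exact hb.2.1 hij.symm | exact hb.2.2 hij.symm
         | exact hc.1 hij.symm | exact hc.2.1 hij.symm | exact hc.2.2 hij.symm
         | exact dAB (by assumption) (by assumption) hij
         | exact dAC (by assumption) (by assumption) hij
         | exact dBC (by assumption) (by assumption) hij
         | exact dAB (by assumption) (by assumption) hij.symm
         | exact dAC (by assumption) (by assumption) hij.symm
         | exact dBC (by assumption) (by assumption) hij.symm)
  · intro i j
    fin_cases i <;> fin_cases j <;> refine ⟨fun h => ?_, fun h => ?_, fun h => ?_⟩ <;>
      first
      | assumption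
      | exact absurd h (by decide)
  · intro i
    fin_cases i
    · exact hT' t1
    · exact hT' t2
    · exact hT' t3
  · intro j
    fin_cases j
    · exact hT' t4
    · exact hT' t5
    · exact hT' t6
end

section
/- Let δ > 0 and let n, M be positive integers with M dividing n. Let A = {a₁,…,aₙ}, C = {c₁,…,cₙ} be enumerated sets of n points of ℝ² each, let B be a set of n points of ℝ², and let T ⊆ A × B × C be a set of triples with |T| ≥ δn² such that for every b ∈ B the correspondence induced by T is order-reversing: whenever (a_{i₁}, b, c_{k₁}) ∈ T and (a_{i₂}, b, c_{k₂}) ∈ T with i₁ > i₂, one has k₁ < k₂. Partition the indices into consecutive blocks P₁ = {a₁,…,a_M}, P₂ = {a_{M+1},…,a_{2M}}, … of A and Q₁ = {c₁,…,c_M}, Q₂ = {c_{M+1},…,c_{2M}}, … of C, each of size M. Then at least δn²/4 − δMn/8 triples of T are (δ/8)-good. -/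
/-!
For a fixed middle point `b`, order reversal makes the triples of `T` through `b` a descending
staircase in the index grid. Hence the block pairs `(p, q)` that they meet are determined by the
number `p + (m - q)`, where `m = n / M` (`cell_eq_of_sum_eq`), and this number is less than `2 m`.
So each `b` meets at most `2 m` block pairs. A block pair containing a bad triple contains fewer
than `δ M / 8` triples, so there are at most `n * 2 m * (δ M / 8) = δ n² / 4` bad triples, which
leaves at least `3 δ n² / 4` good ones.
-/

open scoped Classical

/-- Along a descending staircase, the block pair of a point `(i, k)` is determined by the position
`i / M + (m - k / M)` of that pair; the subtraction does not truncate because `k < M * m`. -/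
lemma cell_eq_of_sum_eq {M m i₁ i₂ k₁ k₂ : ℕ} (hk₁ : k₁ < M * m) (hk₂ : k₂ < M * m)
    (h₁ : i₂ < i₁ → k₁ < k₂) (h₂ : i₁ < i₂ → k₂ < k₁)
    (h : i₁ / M + (m - k₁ / M) = i₂ / M + (m - k₂ / M)) :
    i₁ / M = i₂ / M ∧ k₁ / M = k₂ / M := by
  have q₁ : k₁ / M < m := Nat.div_lt_of_lt_mul hk₁
  have q₂ : k₂ / M < m := Nat.div_lt_of_lt_mul hk₂
  rcases lt_trichotomy i₁ i₂ with hi | hi | hi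
  · have := Nat.div_le_div_right (c := M) hi.le
    have := Nat.div_le_div_right (c := M) (h₂ hi).le
    omega
  · subst hi
    omega
  · have := Nat.div_le_div_right (c := M) hi.le
    have := Nat.div_le_div_right (c := M) (h₁ hi).le
    omega

/-- Let `δ > 0`, let `M ∣ n`, let `A = {a 0, …, a (n-1)}` and
`C = {c 0, …, c (n-1)}` be enumerated `n`-point sets of the plane and `B` an `n`-point set.
A triple of `T` is encoded as `(i, b, k)`, standing for the point triple `(a i, b, c k)`.
Suppose `|T| ≥ δ n²` and that for every `b ∈ B` the correspondence induced by `T` is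
order-reversing.  Partitioning the indices into consecutive blocks of size `M`
(block of index `i` is `i / M`), a triple `(i, b, k) ∈ T` is `ε`-good if at least `ε M`
triples `(i', b, k') ∈ T` have the same middle point `b` and satisfy `i' / M = i / M`,
`k' / M = k / M`.  Then at least `δn²/4 − δMn/8` triples of `T` are `(δ/8)`-good. -/
theorem statement3 (δ : ℝ) (hδ : 0 < δ) (n M : ℕ) (hn : 0 < n) (hM : 0 < M)
    (hdvd : M ∣ n) (a c : Fin n → Pt)
    (ha : Function.Injective a) (hc : Function.Injective c)
    (B : Finset Pt) (hB : B.card = n)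
    (T : Finset (Fin n × Pt × Fin n))
    (hTB : ∀ t ∈ T, t.2.1 ∈ B)
    (hTcard : δ * (n : ℝ) ^ 2 ≤ (T.card : ℝ))
    (hrev : ∀ (b : Pt) (i₁ i₂ k₁ k₂ : Fin n),
      (i₁, b, k₁) ∈ T → (i₂, b, k₂) ∈ T → i₂ < i₁ → k₁ < k₂) :
    δ * (n : ℝ) ^ 2 / 4 - δ * (M : ℝ) * (n : ℝ) / 8 ≤
      ((T.filter (fun t =>
        δ / 8 * (M : ℝ) ≤
          ((T.filter (fun t' => t'.2.1 = t.2.1 ∧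
            (t'.1 : ℕ) / M = (t.1 : ℕ) / M ∧
            (t'.2.2 : ℕ) / M = (t.2.2 : ℕ) / M)).card : ℝ))).card : ℝ) := by
  obtain ⟨m, rfl⟩ := hdvd
  set good : Fin (M * m) × Pt × Fin (M * m) → Prop := fun t =>
    δ / 8 * (M : ℝ) ≤
      ((T.filter (fun t' => t'.2.1 = t.2.1 ∧
        (t'.1 : ℕ) / M = (t.1 : ℕ) / M ∧
        (t'.2.2 : ℕ) / M = (t.2.2 : ℕ) / M)).card : ℝ) with hgood
  let f : Fin (M * m) × Pt × Fin (M * m) → Pt × ℕ := fun t =>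
    (t.2.1, (t.1 : ℕ) / M + (m - (t.2.2 : ℕ) / M))
  have hmaps : ∀ t ∈ T.filter (fun t => ¬ good t), f t ∈ B ×ˢ Finset.range (2 * m) := by
    intro t ht
    have hp : (t.1 : ℕ) / M < m := Nat.div_lt_of_lt_mul t.1.2
    refine Finset.mem_product.2 ⟨hTB t (Finset.mem_filter.1 ht).1, Finset.mem_range.2 ?_⟩
    change (t.1 : ℕ) / M + (m - (t.2.2 : ℕ) / M) < 2 * m
    have := Nat.sub_le m ((t.2.2 : ℕ) / M)
    linarith
  -- A fiber of `f` lies in a single block pair, which is sparse if it contains a bad triple.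
  have hfiber : ∀ x ∈ B ×ˢ Finset.range (2 * m),
      ((((T.filter (fun t => ¬ good t)).filter (fun t => f t = x)).card : ℕ) : ℝ)
        ≤ δ / 8 * (M : ℝ) := by
    intro x _
    rcases ((T.filter (fun t => ¬ good t)).filter (fun t => f t = x)).eq_empty_or_nonempty
      with h0 | ⟨t, ht⟩
    · rw [h0, Finset.card_empty, Nat.cast_zero]
      positivity
    · obtain ⟨ht1, htx⟩ := Finset.mem_filter.1 ht
      obtain ⟨htT, htbad⟩ := Finset.mem_filter.1 ht1
      refine le_trans ?_ (not_le.1 htbad).le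
      refine Nat.cast_le.2 (Finset.card_le_card ?_)
      intro s hs
      obtain ⟨hs1, hsx⟩ := Finset.mem_filter.1 hs
      have hsT := (Finset.mem_filter.1 hs1).1
      have hst : f s = f t := hsx.trans htx.symm
      obtain ⟨i₁, b₁, k₁⟩ := s
      obtain ⟨i₂, b₂, k₂⟩ := t
      obtain ⟨hb, hsum⟩ := Prod.mk.inj hst
      dsimp only at hb hsum
      subst hb
      exact Finset.mem_filter.2 ⟨hsT, rfl, cell_eq_of_sum_eq k₁.2 k₂.2
        (fun h => hrev _ _ _ _ _ hsT htT h) (fun h => hrev _ _ _ _ _ htT hsT h) hsum⟩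
  have hbad : ((T.filter (fun t => ¬ good t)).card : ℝ) ≤ δ * ((M * m : ℕ) : ℝ) ^ 2 / 4 := by
    rw [Finset.card_eq_sum_card_fiberwise hmaps, Nat.cast_sum]
    refine (Finset.sum_le_card_nsmul _ _ _ hfiber).trans (le_of_eq ?_)
    rw [Finset.card_product, hB, Finset.card_range, nsmul_eq_mul]
    push_cast
    ring
  have hsplit : ((T.filter good).card : ℝ) + ((T.filter (fun t => ¬ good t)).card : ℝ)
      = (T.card : ℝ) := by
    exact_mod_cast Finset.card_filter_add_card_filter_not (s := T) good
  have h1 : 0 ≤ δ * (M : ℝ) * ((M * m : ℕ) : ℝ) := by positivity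
  have h2 : 0 ≤ δ * ((M * m : ℕ) : ℝ) ^ 2 := by positivity
  linarith
end

section
/- For every δ > 0 there exist δ' > 0, a natural number N, and a threshold n₀ such that the following holds for all n ≥ n₀. Let A, B, C ⊆ ℝ² be mutually avoiding sets of n points each, enumerated as A = {a₁,…,aₙ}, B = {b₁,…,bₙ}, C = {c₁,…,cₙ} so that the three order-consistency conditions hold, and let T be a set of collinear triples (a,b,c) ∈ A × B × C with |T| ≥ δn². Then there exist at least δ'n² (6,3) configurations in T that are pairwise edge-disjoint (no two of them share a triple of T) and each of which is N-skinny. -/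
/-- The points of the plane spanned by a configuration of index triples, where the
triple `(i, j, k)` stands for the point triple `(a i, b j, c k)`. -/
noncomputable def cfgPoints {n : ℕ} (a b c : Fin n → Pt)
    (cfg : Finset (Fin n × Fin n × Fin n)) : Finset Pt :=
  (cfg.image fun t => a t.1) ∪ (cfg.image fun t => b t.2.1) ∪ (cfg.image fun t => c t.2.2)

/-- A `(6,3)` configuration inside `T`: three distinct triples of `T` whose union contains
at most `6` points. -/
def IsSixThree {n : ℕ} (a b c : Fin n → Pt) (T : Finset (Fin n × Fin n × Fin n))
    (cfg : Finset (Fin n × Fin n × Fin n)) : Prop :=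
  cfg ⊆ T ∧ cfg.card = 3 ∧ (cfgPoints a b c cfg).card ≤ 6

/-- A configuration is `N`-skinny: within each of the three coordinate classes, any two of
its indices differ by at most `N`. -/
def IsSkinny {n : ℕ} (N : ℕ) (cfg : Finset (Fin n × Fin n × Fin n)) : Prop :=
  ∀ t ∈ cfg, ∀ t' ∈ cfg,
    ((t.1 : ℤ) - (t'.1 : ℤ)).natAbs ≤ N ∧
    ((t.2.1 : ℤ) - (t'.2.1 : ℤ)).natAbs ≤ N ∧
    ((t.2.2 : ℤ) - (t'.2.2 : ℤ)).natAbs ≤ N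

open Finset SimpleGraph in
/-- The Ruzsa–Szemerédi theorem in the form used below: at a suitable scale `M`, a linear
tripartite triple system on `M + M + M` points with at least `ε M²` triples spans a triangle
which is not one of its triples. -/
lemma exists_scale_accidental (ε : ℝ) (hε : 0 < ε) :
    ∃ M : ℕ, 0 < M ∧ ∀ t : Finset (Fin M × Fin M × Fin M),
      TripartiteFromTriangles.ExplicitDisjoint t → ε * (M : ℝ) ^ 2 ≤ (#t : ℝ) →
      ¬ TripartiteFromTriangles.NoAccidental t := by
  have hβ : 0 < triangleRemovalBound (ε / 9) := triangleRemovalBound_pos (by positivity)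
  obtain ⟨M, hM⟩ := exists_nat_gt (1 / triangleRemovalBound (ε / 9))
  have hM0 : (0 : ℝ) < M := lt_trans (by positivity) hM
  refine ⟨M, by exact_mod_cast hM0, fun t hd ht hna => ?_⟩
  have hfar : (TripartiteFromTriangles.graph t).FarFromTriangleFree (ε / 9) := by
    apply TripartiteFromTriangles.farFromTriangleFree
    simp only [Fintype.card_fin]
    push_cast
    linarith
  have h1 := hfar.le_card_cliqueFinset
  rw [TripartiteFromTriangles.card_triangles] at h1
  simp only [Fintype.card_sum, Fintype.card_fin] at h1
  push_cast at h1
  -- Two coordinates determine the third, so there are at most `M²` triples, hence triangles.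
  have h2 : #t ≤ M ^ 2 := by
    have : #t ≤ #(univ : Finset (Fin M × Fin M)) := by
      refine Finset.card_le_card_of_injOn (fun x => (x.1, x.2.1)) (fun _ _ => by simp) ?_
      rintro ⟨x, y, z⟩ hx ⟨x', y', z'⟩ hx' h
      obtain ⟨rfl, rfl⟩ := Prod.mk.inj h
      rw [hd.inj₂ hx hx']
    simpa [sq] using this
  have h3 : (#t : ℝ) ≤ (M : ℝ) ^ 2 := by exact_mod_cast h2
  rw [div_lt_iff₀ hβ] at hM
  have h5 : triangleRemovalBound (ε / 9) * ((M : ℝ) + (M + M)) ^ 3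
      = 27 * (M * triangleRemovalBound (ε / 9)) * (M : ℝ) ^ 2 := by ring
  have h6 : (0 : ℝ) < (M : ℝ) ^ 2 := by positivity
  nlinarith

open Finset in
/-- A staircase count. Among pairs of blocks `(X, Y)` met by a monotone set, `X + Y` determines
the pair. Hence a map `f` whose values `(u, X, Y)` are staircases for each fixed `u` takes at
most `n (2R + 1)` values when `X, Y ≤ R`. -/
lemma card_image_staircase {n R : ℕ} {α : Type*} (T : Finset α) (f : α → Fin n × ℕ × ℕ)
    (hR : ∀ t ∈ T, (f t).2.1 ≤ R ∧ (f t).2.2 ≤ R)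
    (hmono : ∀ t ∈ T, ∀ s ∈ T, (f t).1 = (f s).1 → (f t).2.1 < (f s).2.1 →
      (f t).2.2 ≤ (f s).2.2) :
    #(T.image f) ≤ n * (2 * R + 1) := by
  have : #(T.image f) ≤ #((univ : Finset (Fin n)) ×ˢ range (2 * R + 1)) := by
    refine Finset.card_le_card_of_injOn (fun x => (x.1, x.2.1 + x.2.2)) ?_ ?_
    · intro x hx
      obtain ⟨t, ht, rfl⟩ := Finset.mem_image.1 (Finset.mem_coe.1 hx)
      have := hR t ht
      simp only [coe_product, Set.mem_prod, mem_coe, mem_univ, mem_range, true_and]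
      omega
    · intro x hx y hy h
      obtain ⟨t, ht, rfl⟩ := Finset.mem_image.1 (Finset.mem_coe.1 hx)
      obtain ⟨s, hs, rfl⟩ := Finset.mem_image.1 (Finset.mem_coe.1 hy)
      obtain ⟨h1, h2⟩ := Prod.mk.inj h
      have a1 := hmono t ht s hs h1
      have a2 := hmono s hs t ht h1.symm
      refine Prod.ext h1 (Prod.ext ?_ ?_) <;> omega
  simpa using this

open Finset in
/-- The localization step. Cut each index set into blocks of length `M`. A system
satisfying the first and third order conditions with `δ n²` triples has `(δ/6)² M²` triples in one product of three blocks. -/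
lemma exists_dense_box (δ : ℝ) (hδ : 0 < δ) {M n : ℕ} (hM : 0 < M) (hn : M ≤ n)
    (T : Finset (Fin n × Fin n × Fin n))
    (h1 : ∀ i j₁ j₂ k₁ k₂ : Fin n, (i, j₁, k₁) ∈ T → (i, j₂, k₂) ∈ T → j₁ < j₂ → k₁ < k₂)
    (h3 : ∀ i₁ i₂ j₁ j₂ k : Fin n, (i₁, j₁, k) ∈ T → (i₂, j₂, k) ∈ T → i₁ < i₂ → j₁ < j₂)
    (hT : δ * (n : ℝ) ^ 2 ≤ (#T : ℝ)) :
    ∃ I J K : ℕ, (δ / 6) ^ 2 * (M : ℝ) ^ 2 ≤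
      (#{t ∈ T | (t.1 : ℕ) / M = I ∧ (t.2.1 : ℕ) / M = J ∧ (t.2.2 : ℕ) / M = K} : ℝ) := by
  classical
  have hMr : (0 : ℝ) < M := by exact_mod_cast hM
  have hnr : (0 : ℝ) < n := by exact_mod_cast lt_of_lt_of_le hM hn
  set f : Fin n × Fin n × Fin n → Fin n × ℕ × ℕ :=
    fun t => (t.1, (t.2.1 : ℕ) / M, (t.2.2 : ℕ) / M) with hf
  set g : Fin n × Fin n × Fin n → Fin n × ℕ × ℕ :=
    fun t => (t.2.2, (t.1 : ℕ) / M, (t.2.1 : ℕ) / M) with hg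
  have hdiv : ∀ i : Fin n, (i : ℕ) / M ≤ n / M := fun i => Nat.div_le_div_right i.2.le
  have hfc : #(T.image f) ≤ n * (2 * (n / M) + 1) := by
    refine card_image_staircase T f (fun t _ => ⟨hdiv _, hdiv _⟩) ?_
    rintro ⟨i, j, k⟩ ht ⟨i', j', k'⟩ hs hii hlt
    obtain rfl : i = i' := hii
    have hj : j < j' := Fin.lt_def.2 (lt_of_not_ge fun h => hlt.not_ge (Nat.div_le_div_right h))
    exact Nat.div_le_div_right (h1 _ _ _ _ _ ht hs hj).le
  have hgc : #(T.image g) ≤ n * (2 * (n / M) + 1) := by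
    refine card_image_staircase T g (fun t _ => ⟨hdiv _, hdiv _⟩) ?_
    rintro ⟨i, j, k⟩ ht ⟨i', j', k'⟩ hs hkk hlt
    obtain rfl : k = k' := hkk
    have hi : i < i' := Fin.lt_def.2 (lt_of_not_ge fun h => hlt.not_ge (Nat.div_le_div_right h))
    exact Nat.div_le_div_right (h3 _ _ _ _ _ ht hs hi).le
  have hcount : ((n * (2 * (n / M) + 1) : ℕ) : ℝ) ≤ 3 * (n : ℝ) ^ 2 / M := by
    rw [le_div_iff₀ hMr]
    have : n * (2 * (n / M) + 1) * M ≤ 3 * n ^ 2 := by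
      have := Nat.div_mul_le_self n M
      nlinarith
    exact_mod_cast this
  have hfr : (#(T.image f) : ℝ) ≤ 3 * (n : ℝ) ^ 2 / M := le_trans (by exact_mod_cast hfc) hcount
  have hgr : (#(T.image g) : ℝ) ≤ 3 * (n : ℝ) ^ 2 / M := le_trans (by exact_mod_cast hgc) hcount
  -- `T₁` keeps the triples whose `f`-class is large; few triples are lost.
  set T₁ := {t ∈ T | δ / 6 * M ≤ (#{s ∈ T | f s = f t} : ℝ)} with hT₁
  set T₂ := {t ∈ T | ¬ δ / 6 * M ≤ (#{s ∈ T | f s = f t} : ℝ)} with hT₂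
  have hsplit : (#T₁ : ℝ) + #T₂ = #T := by
    exact_mod_cast Finset.card_filter_add_card_filter_not (s := T) _
  have hT₂c : (#T₂ : ℝ) ≤ δ / 2 * (n : ℝ) ^ 2 := by
    calc (#T₂ : ℝ) = ∑ b ∈ T₂.image f, (#{a ∈ T₂ | f a = b} : ℝ) := by
          exact_mod_cast Finset.card_eq_sum_card_image f T₂
      _ ≤ ∑ b ∈ T₂.image f, δ / 6 * M := by
          refine Finset.sum_le_sum fun b hb => ?_
          obtain ⟨t, ht, rfl⟩ := Finset.mem_image.1 hb
          have := (Finset.mem_filter.1 ht).2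
          refine le_trans ?_ (not_le.1 this).le
          exact_mod_cast Finset.card_le_card
            (Finset.filter_subset_filter _ (Finset.filter_subset _ _))
      _ = #(T₂.image f) * (δ / 6 * M) := by simp
      _ ≤ (3 * (n : ℝ) ^ 2 / M) * (δ / 6 * M) := by
          gcongr
          refine le_trans ?_ hfr
          exact_mod_cast Finset.card_le_card
            (Finset.image_subset_image (Finset.filter_subset _ _))
      _ = δ / 2 * (n : ℝ) ^ 2 := by field_simp; norm_num
  have hT₁c : δ / 2 * (n : ℝ) ^ 2 ≤ #T₁ := by linarith
  have hT₁ne : T₁.Nonempty := by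
    rw [← Finset.card_pos]
    have : (0 : ℝ) < #T₁ := lt_of_lt_of_le (by positivity) hT₁c
    exact_mod_cast this
  -- Some `g`-class of `T₁` is large by averaging.
  obtain ⟨b, hb, hbc⟩ : ∃ b ∈ T₁.image g, δ / 6 * M ≤ (#{a ∈ T₁ | g a = b} : ℝ) := by
    refine Finset.exists_le_of_sum_le (hT₁ne.image g) ?_
    calc ∑ _b ∈ T₁.image g, δ / 6 * (M : ℝ) = #(T₁.image g) * (δ / 6 * M) := by simp
      _ ≤ (3 * (n : ℝ) ^ 2 / M) * (δ / 6 * M) := by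
          gcongr
          refine le_trans ?_ hgr
          exact_mod_cast Finset.card_le_card
            (Finset.image_subset_image (Finset.filter_subset _ _))
      _ = δ / 2 * (n : ℝ) ^ 2 := by field_simp; norm_num
      _ ≤ #T₁ := hT₁c
      _ = ∑ b ∈ T₁.image g, (#{a ∈ T₁ | g a = b} : ℝ) := by
          exact_mod_cast Finset.card_eq_sum_card_image g T₁
  obtain ⟨k, I, J⟩ := b
  refine ⟨I, J, (k : ℕ) / M, ?_⟩
  set D := {a ∈ T₁ | g a = (k, I, J)} with hD
  set B := {t ∈ T | (t.1 : ℕ) / M = I ∧ (t.2.1 : ℕ) / M = J ∧ (t.2.2 : ℕ) / M = (k : ℕ) / M}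
    with hB
  -- The triples of `D` share `k`, so they have distinct first coordinates and distinct
  -- `f`-classes; each of these classes lies in the box.
  have hfinj : Set.InjOn f D := by
    rintro ⟨i, j, k₁⟩ hx ⟨i', j', k₂⟩ hy h
    simp only [hD, hT₁, hg, coe_filter, mem_filter, Set.mem_ofPred_eq, Prod.mk.injEq] at hx hy
    simp only [hf, Prod.mk.injEq] at h
    obtain rfl := h.1
    obtain ⟨⟨hx1, -⟩, rfl, -⟩ := hx
    obtain ⟨⟨hy1, -⟩, rfl, -⟩ := hy
    rcases lt_trichotomy j j' with hlt | rfl | hlt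
    · exact absurd (h1 _ _ _ _ _ hx1 hy1 hlt) (lt_irrefl _)
    · rfl
    · exact absurd (h1 _ _ _ _ _ hy1 hx1 hlt) (lt_irrefl _)
  have hclass : ∀ t ∈ D, {s ∈ T | f s = f t} ⊆ {s ∈ B | f s = f t} := by
    rintro ⟨i, j, k₁⟩ hx ⟨i', j', k₂⟩ hy
    simp only [hD, hT₁, hg, mem_filter, Prod.mk.injEq] at hx
    simp only [hf, mem_filter, Prod.mk.injEq] at hy
    simp only [hB, hf, mem_filter, Prod.mk.injEq]
    obtain ⟨-, rfl, hI, hJ⟩ := hx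
    obtain ⟨hyT, rfl, e1, e2⟩ := hy
    exact ⟨⟨hyT, hI, e1.trans hJ, e2⟩, rfl, e1, e2⟩
  calc (δ / 6) ^ 2 * (M : ℝ) ^ 2 = (δ / 6 * M) * (δ / 6 * M) := by ring
    _ ≤ #D * (δ / 6 * M) := by gcongr
    _ = ∑ t ∈ D, δ / 6 * (M : ℝ) := by simp
    _ ≤ ∑ t ∈ D, (#{s ∈ B | f s = f t} : ℝ) := by
        refine Finset.sum_le_sum fun t ht => ?_
        have h4 : t ∈ T₁ := (Finset.mem_filter.1 ht).1
        refine le_trans (Finset.mem_filter.1 h4).2 ?_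
        exact_mod_cast Finset.card_le_card (hclass t ht)
    _ = ∑ b ∈ D.image f, (#{s ∈ B | f s = b} : ℝ) :=
        (Finset.sum_image (f := fun b => (#{s ∈ B | f s = b} : ℝ)) hfinj).symm
    _ ≤ #B := by
        rw [← Nat.cast_sum]
        rw [Finset.sum_card_fiberwise_eq_card_filter]
        exact_mod_cast Finset.card_le_card (Finset.filter_subset _ _)

/-- Two triples sharing their first two points share the third, by mutual avoidance. -/
lemma third_unique {A B C : Finset Pt} (hav : MutuallyAvoiding A B C) (hA : 2 ≤ A.card)
    {p q r s : Pt} (hp : p ∈ A) (hq : q ∈ B) (hr : r ∈ C) (hs : s ∈ C)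
    (h1 : Collinear ℝ {p, q, r}) (h2 : Collinear ℝ {p, q, s}) : r = s := by
  obtain ⟨hAB, -, -, -, hCA, -⟩ := hav
  have hpq : p ≠ q := by
    rintro rfl
    obtain ⟨p', hp', hne⟩ := Finset.exists_mem_ne (by omega : 1 < A.card) p
    exact Set.disjoint_left.1 (hAB p hp p' hp' hne.symm) (left_mem_affineSpan_pair ℝ p p')
      (subset_convexHull ℝ _ hq)
  by_contra hrs
  have hr' : r ∈ line[ℝ, p, q] :=
    h1.mem_affineSpan_of_mem_of_ne (by simp) (by simp) (by simp) hpq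
  have hs' : s ∈ line[ℝ, p, q] :=
    h2.mem_affineSpan_of_mem_of_ne (by simp) (by simp) (by simp) hpq
  have hcol := collinear_insert_insert_of_mem_affineSpan_pair hr' hs'
  have hp' : p ∈ line[ℝ, r, s] :=
    hcol.mem_affineSpan_of_mem_of_ne (by simp) (by simp) (by simp) hrs
  exact Set.disjoint_left.1 (hCA r hr s hs hrs) hp' (subset_convexHull ℝ _ hp)

open Finset SimpleGraph in
/-- A dense order-consistent linear triple system contains a configuration of three triples
pairwise sharing a point, all of whose indices lie in common blocks of bounded length. -/
lemma exists_skinny (δ : ℝ) (hδ : 0 < δ) :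
    ∃ M : ℕ, 0 < M ∧ ∀ n : ℕ, M ≤ n → ∀ T : Finset (Fin n × Fin n × Fin n),
      (∀ i j k₁ k₂ : Fin n, (i, j, k₁) ∈ T → (i, j, k₂) ∈ T → k₁ = k₂) →
      (∀ i j₁ j₂ k₁ k₂ : Fin n, (i, j₁, k₁) ∈ T → (i, j₂, k₂) ∈ T → j₁ < j₂ → k₁ < k₂) →
      (∀ i₁ i₂ j₁ j₂ k : Fin n, (i₁, j₁, k) ∈ T → (i₂, j₂, k) ∈ T → i₁ < i₂ → j₁ < j₂) →
      δ * (n : ℝ) ^ 2 ≤ (#T : ℝ) →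
      ∃ i i' j j' k k' : Fin n, (i', j, k) ∈ T ∧ (i, j', k) ∈ T ∧ (i, j, k') ∈ T ∧
        i ≠ i' ∧ j ≠ j' ∧ k ≠ k' ∧ (i : ℕ) / M = (i' : ℕ) / M ∧
        (j : ℕ) / M = (j' : ℕ) / M ∧ (k : ℕ) / M = (k' : ℕ) / M := by
  classical
  obtain ⟨M, hM, hRS⟩ := exists_scale_accidental ((δ / 6) ^ 2) (by positivity)
  refine ⟨M, hM, fun n hn T h0 h1 h3 hT => ?_⟩
  obtain ⟨I, J, K, hbox⟩ := exists_dense_box δ hδ hM hn T h1 h3 hT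
  set B := {t ∈ T | (t.1 : ℕ) / M = I ∧ (t.2.1 : ℕ) / M = J ∧ (t.2.2 : ℕ) / M = K} with hB
  have hBT : ∀ i j k, (i, j, k) ∈ B → (i, j, k) ∈ T ∧ (i : ℕ) / M = I ∧ (j : ℕ) / M = J ∧
      (k : ℕ) / M = K := fun i j k h => Finset.mem_filter.1 h
  -- Residues modulo `M` identify each block with a subset of `Fin M`.
  let ρ : Fin n → Fin M := fun i => ⟨(i : ℕ) % M, Nat.mod_lt _ hM⟩
  have hρ : ∀ i i' : Fin n, (i : ℕ) / M = (i' : ℕ) / M → ρ i = ρ i' → i = i' := by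
    intro i i' hd hm
    have hm' : (i : ℕ) % M = (i' : ℕ) % M := congrArg Fin.val hm
    apply Fin.ext
    rw [← Nat.div_add_mod (i : ℕ) M, ← Nat.div_add_mod (i' : ℕ) M, hd, hm']
  let t : Finset (Fin M × Fin M × Fin M) := B.image fun x => (ρ x.1, ρ x.2.1, ρ x.2.2)
  have ht : ∀ x y z, (x, y, z) ∈ t → ∃ i j k, (i, j, k) ∈ B ∧ ρ i = x ∧ ρ j = y ∧ ρ k = z := by
    intro x y z h
    obtain ⟨⟨i, j, k⟩, hB', he⟩ := Finset.mem_image.1 h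
    simp only [Prod.mk.injEq] at he
    exact ⟨i, j, k, hB', he⟩
  have hcard : #t = #B := by
    apply Finset.card_image_of_injOn
    rintro ⟨i, j, k⟩ hx ⟨i', j', k'⟩ hy h
    simp only [Prod.mk.injEq] at h
    obtain ⟨-, a1, a2, a3⟩ := hBT _ _ _ hx
    obtain ⟨-, b1, b2, b3⟩ := hBT _ _ _ hy
    rw [hρ i i' (a1.trans b1.symm) h.1, hρ j j' (a2.trans b2.symm) h.2.1,
      hρ k k' (a3.trans b3.symm) h.2.2]
  have hdis : TripartiteFromTriangles.ExplicitDisjoint t := by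
    constructor
    · intro x y z x' hx hx'
      obtain ⟨i, j, k, hb, rfl, rfl, rfl⟩ := ht _ _ _ hx
      obtain ⟨i', j', k', hb', rfl, e1, e2⟩ := ht _ _ _ hx'
      obtain ⟨a0, a1, a2, a3⟩ := hBT _ _ _ hb
      obtain ⟨b0, b1, b2, b3⟩ := hBT _ _ _ hb'
      obtain rfl := hρ _ _ (b2.trans a2.symm) e1
      obtain rfl := hρ _ _ (b3.trans a3.symm) e2
      rcases lt_trichotomy i i' with hlt | rfl | hlt
      · exact absurd (h3 _ _ _ _ _ a0 b0 hlt) (lt_irrefl _)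
      · rfl
      · exact absurd (h3 _ _ _ _ _ b0 a0 hlt) (lt_irrefl _)
    · intro x y z x' hx hx'
      obtain ⟨i, j, k, hb, rfl, rfl, rfl⟩ := ht _ _ _ hx
      obtain ⟨i', j', k', hb', e1, rfl, e2⟩ := ht _ _ _ hx'
      obtain ⟨a0, a1, a2, a3⟩ := hBT _ _ _ hb
      obtain ⟨b0, b1, b2, b3⟩ := hBT _ _ _ hb'
      obtain rfl := hρ _ _ (b1.trans a1.symm) e1
      obtain rfl := hρ _ _ (b3.trans a3.symm) e2
      rcases lt_trichotomy j j' with hlt | rfl | hlt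
      · exact absurd (h1 _ _ _ _ _ a0 b0 hlt) (lt_irrefl _)
      · rfl
      · exact absurd (h1 _ _ _ _ _ b0 a0 hlt) (lt_irrefl _)
    · intro x y z x' hx hx'
      obtain ⟨i, j, k, hb, rfl, rfl, rfl⟩ := ht _ _ _ hx
      obtain ⟨i', j', k', hb', e1, e2, rfl⟩ := ht _ _ _ hx'
      obtain ⟨a0, a1, a2, a3⟩ := hBT _ _ _ hb
      obtain ⟨b0, b1, b2, b3⟩ := hBT _ _ _ hb'
      obtain rfl := hρ _ _ (b1.trans a1.symm) e1
      obtain rfl := hρ _ _ (b2.trans a2.symm) e2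
      rw [h0 _ _ _ _ a0 b0]
  by_contra hno
  refine hRS t hdis (by rw [hcard]; exact hbox) ⟨?_⟩
  intro x x' y y' z z' hx hy hz
  obtain ⟨i', j, k, hb, rfl, rfl, rfl⟩ := ht _ _ _ hx
  obtain ⟨i, j', k₁, hb', rfl, rfl, e2⟩ := ht _ _ _ hy
  obtain ⟨i₁, j₁, k', hb'', e3, e4, rfl⟩ := ht _ _ _ hz
  obtain ⟨a0, a1, a2, a3⟩ := hBT _ _ _ hb
  obtain ⟨b0, b1, b2, b3⟩ := hBT _ _ _ hb'
  obtain ⟨c0, c1, c2, c3⟩ := hBT _ _ _ hb''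
  obtain rfl := hρ _ _ (b3.trans a3.symm) e2
  obtain rfl := hρ _ _ (c1.trans b1.symm) e3
  obtain rfl := hρ _ _ (c2.trans a2.symm) e4
  by_contra hne
  push Not at hne
  exact hno ⟨_, i', _, j', _, k', a0, b0, c0, fun h => hne.1 (congrArg ρ h),
    fun h => hne.2.1 (congrArg ρ h), fun h => hne.2.2 (congrArg ρ h),
    c1.trans a1.symm, c2.trans b2.symm, b3.trans c3.symm⟩

/-- For every `δ > 0` there are `δ' > 0`, `N` and `n₀` such that:
for mutually avoiding `n`-point sets `A, B, C` (`n ≥ n₀`) enumerated order-consistently,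
any set `T` of collinear triples with `|T| ≥ δ n²` contains at least `δ' n²` pairwise
edge-disjoint `N`-skinny `(6,3)` configurations. -/
theorem statement4 (δ : ℝ) (hδ : 0 < δ) :
    ∃ (δ' : ℝ) (N n₀ : ℕ), 0 < δ' ∧
      ∀ n : ℕ, n₀ ≤ n →
      ∀ A B C : Finset Pt, A.card = n → B.card = n → C.card = n →
        MutuallyAvoiding A B C →
        ∀ a b c : Fin n → Pt,
          Function.Injective a → Function.Injective b → Function.Injective c →
          (∀ x : Pt, x ∈ A ↔ ∃ i, a i = x) →
          (∀ x : Pt, x ∈ B ↔ ∃ j, b j = x) →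
          (∀ x : Pt, x ∈ C ↔ ∃ k, c k = x) →
          ∀ T : Finset (Fin n × Fin n × Fin n),
            (∀ t ∈ T, Collinear ℝ {a t.1, b t.2.1, c t.2.2}) →
            (∀ i j₁ j₂ k₁ k₂ : Fin n,
              (i, j₁, k₁) ∈ T → (i, j₂, k₂) ∈ T → j₁ < j₂ → k₁ < k₂) →
            (∀ i₁ i₂ j k₁ k₂ : Fin n,
              (i₁, j, k₁) ∈ T → (i₂, j, k₂) ∈ T → i₂ < i₁ → k₁ < k₂) →
            (∀ i₁ i₂ j₁ j₂ k : Fin n,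
              (i₁, j₁, k) ∈ T → (i₂, j₂, k) ∈ T → i₁ < i₂ → j₁ < j₂) →
            δ * (n : ℝ) ^ 2 ≤ (T.card : ℝ) →
            ∃ F : Finset (Finset (Fin n × Fin n × Fin n)),
              δ' * (n : ℝ) ^ 2 ≤ (F.card : ℝ) ∧
              (∀ cfg ∈ F, IsSixThree a b c T cfg ∧ IsSkinny N cfg) ∧
              (∀ cfg ∈ F, ∀ cfg' ∈ F, cfg ≠ cfg' → Disjoint cfg cfg') := by
  classical
  obtain ⟨M, hM, hsk⟩ := exists_skinny (δ / 2) (by positivity)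
  refine ⟨δ / 6, M, max M 2, by positivity, ?_⟩
  intro n hn A B C hA hB hC hav a b c ha hb hc hAm hBm hCm T hcol h1 h2 h3 hT
  have hMn : M ≤ n := le_trans (le_max_left _ _) hn
  have h2n : 2 ≤ n := le_trans (le_max_right _ _) hn
  have h0 : ∀ i j k₁ k₂ : Fin n, (i, j, k₁) ∈ T → (i, j, k₂) ∈ T → k₁ = k₂ := by
    intro i j k₁ k₂ hx hy
    have hai : a i ∈ A := (hAm (a i)).2 ⟨i, rfl⟩
    have hbj : b j ∈ B := (hBm (b j)).2 ⟨j, rfl⟩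
    have hck₁ : c k₁ ∈ C := (hCm (c k₁)).2 ⟨k₁, rfl⟩
    have hck₂ : c k₂ ∈ C := (hCm (c k₂)).2 ⟨k₂, rfl⟩
    have hA2 : 2 ≤ A.card := by omega
    exact hc (third_unique hav hA2 hai hbj hck₁ hck₂ (hcol (i, j, k₁) hx) (hcol (i, j, k₂) hy))
  -- A largest disjoint family works: otherwise the uncovered triples still have density
  -- `δ / 2` and yield a further configuration.
  let good : Finset (Finset (Finset (Fin n × Fin n × Fin n))) :=
    Finset.univ.filter fun F => (∀ cfg ∈ F, IsSixThree a b c T cfg ∧ IsSkinny M cfg) ∧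
      (∀ cfg ∈ F, ∀ cfg' ∈ F, cfg ≠ cfg' → Disjoint cfg cfg')
  obtain ⟨F, hF, hmax⟩ := Finset.exists_max_image good Finset.card
    ⟨∅, by simp [good]⟩
  obtain ⟨hF1, hF2⟩ := (Finset.mem_filter.1 hF).2
  refine ⟨F, ?_, hF1, hF2⟩
  by_contra hlt
  push Not at hlt
  set U := F.biUnion id with hU
  have hUc : U.card ≤ F.card * 3 :=
    Finset.card_biUnion_le_card_mul _ _ _ fun cfg h => (hF1 cfg h).1.2.1.le
  have hTU : δ / 2 * (n : ℝ) ^ 2 ≤ ((T \ U).card : ℝ) := by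
    have e1 : T.card ≤ (T \ U).card + U.card := by
      have := Finset.le_card_sdiff U T
      omega
    have e2 : (T.card : ℝ) ≤ (T \ U).card + F.card * 3 := by
      exact_mod_cast e1.trans (Nat.add_le_add_left hUc _)
    linarith
  have hsub : ∀ {x}, x ∈ T \ U → x ∈ T := fun h => (Finset.mem_sdiff.1 h).1
  obtain ⟨i, i', j, j', k, k', m1, m2, m3, hi, hj, hk, di, dj, dk⟩ := hsk n hMn (T \ U)
    (fun _ _ _ _ x y => h0 _ _ _ _ (hsub x) (hsub y))
    (fun _ _ _ _ _ x y => h1 _ _ _ _ _ (hsub x) (hsub y))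
    (fun _ _ _ _ _ x y => h3 _ _ _ _ _ (hsub x) (hsub y)) hTU
  set cfg : Finset (Fin n × Fin n × Fin n) := {(i', j, k), (i, j', k), (i, j, k')} with hcfg
  have hcsub : cfg ⊆ T \ U := by
    intro x hx
    simp only [hcfg, Finset.mem_insert, Finset.mem_singleton] at hx
    rcases hx with rfl | rfl | rfl <;> assumption
  have hccard : cfg.card = 3 := by
    rw [hcfg, Finset.card_eq_three]
    refine ⟨_, _, _, ?_, ?_, ?_, rfl⟩ <;> simp only [ne_eq, Prod.mk.injEq] <;> tauto
  have hpts : (cfgPoints a b c cfg).card ≤ 6 := by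
    refine le_trans (Finset.card_le_card ?_)
      (Finset.card_le_six (a := a i) (b := a i') (c := b j) (d := b j') (e := c k) (f := c k'))
    intro x hx
    simp only [cfgPoints, hcfg, Finset.mem_union, Finset.mem_image, Finset.mem_insert,
      Finset.mem_singleton] at hx ⊢
    rcases hx with (⟨t, rfl | rfl | rfl, rfl⟩ | ⟨t, rfl | rfl | rfl, rfl⟩) |
      ⟨t, rfl | rfl | rfl, rfl⟩ <;> simp
  have hblock : ∀ x y : Fin n, (x : ℕ) / M = (y : ℕ) / M → ((x : ℤ) - (y : ℤ)).natAbs ≤ M := by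
    intro x y h
    have e1 := Nat.div_add_mod (x : ℕ) M
    have e2 := Nat.div_add_mod (y : ℕ) M
    rw [h] at e1
    have e3 := Nat.mod_lt (x : ℕ) hM
    have e4 := Nat.mod_lt (y : ℕ) hM
    omega
  have hskinny : IsSkinny M cfg := by
    have hall : ∀ t ∈ cfg, (t.1 : ℕ) / M = (i : ℕ) / M ∧ (t.2.1 : ℕ) / M = (j : ℕ) / M ∧
        (t.2.2 : ℕ) / M = (k : ℕ) / M := by
      intro t ht
      simp only [hcfg, Finset.mem_insert, Finset.mem_singleton] at ht
      rcases ht with rfl | rfl | rfl <;> simp [di, dj, dk]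
    intro t ht s hs
    obtain ⟨p1, p2, p3⟩ := hall t ht
    obtain ⟨q1, q2, q3⟩ := hall s hs
    exact ⟨hblock _ _ (p1.trans q1.symm), hblock _ _ (p2.trans q2.symm),
      hblock _ _ (p3.trans q3.symm)⟩
  have hdisj : ∀ d ∈ F, Disjoint cfg d := by
    intro d hd
    refine Finset.disjoint_left.2 fun x hx hxd => (Finset.mem_sdiff.1 (hcsub hx)).2 ?_
    exact Finset.mem_biUnion.2 ⟨d, hd, hxd⟩
  have hnot : cfg ∉ F := fun h => by
    have := Finset.disjoint_self_iff_empty _ |>.1 (hdisj cfg h)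
    rw [this] at hccard
    simp at hccard
  have hgood : insert cfg F ∈ good := by
    refine Finset.mem_filter.2 ⟨Finset.mem_univ _, ?_, ?_⟩
    · intro d hd
      rcases Finset.mem_insert.1 hd with rfl | hd
      · exact ⟨⟨fun x hx => hsub (hcsub hx), hccard, hpts⟩, hskinny⟩
      · exact hF1 d hd
    · intro d hd e he hne
      rcases Finset.mem_insert.1 hd with rfl | hd <;> rcases Finset.mem_insert.1 he with rfl | he
      · exact absurd rfl hne
      · exact hdisj e he
      · exact (hdisj d hd).symm
      · exact hF2 d hd e he hne
  have := hmax _ hgood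
  rw [Finset.card_insert_of_notMem hnot] at this
  omega
end

section
/- Let H be a 3-uniform hypergraph whose vertex set is partitioned into three parts A, B, C, such that every edge contains exactly one vertex from each part and any two distinct edges share at most one vertex. If e₁, e₂, e₃ are three distinct edges with |e₁ ∪ e₂ ∪ e₃| ≤ 6, then |e₁ ∪ e₂ ∪ e₃| = 6, any two of the three edges intersect in exactly one vertex, the three pairwise intersection vertices are pairwise distinct, and the three intersection vertices lie in three different parts (one in each of A, B, C). -/
/-! Inclusion-exclusion gives `|e₁ ∪ e₂ ∪ e₃| = 9 - (|e₁ ∩ e₂| + |e₂ ∩ e₃| + |e₁ ∩ e₃|) + t`, where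
`t` is the size of the triple intersection. Linearity bounds each pairwise term by `1`, so a union
of size at most `6` forces every pairwise intersection to be a single vertex, `t = 0`, and the union
to have size exactly `6`. As `t = 0`, the three intersection vertices are distinct; any two of them
lie on a common edge, and an edge has only one vertex in each part, so they lie in different
parts. -/

/-- In a linear 3-partite 3-uniform hypergraph (parts `A, B, C`, every edge
with exactly one vertex in each part, any two edges sharing at most one vertex), if three
distinct edges span at most `6` vertices, then they span exactly `6` vertices, any two of
them meet in exactly one vertex, the three intersection vertices are pairwise distinct, and
they lie in three different parts. -/
theorem statement5 {V : Type*} [DecidableEq V] (A B C : Finset V)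
    (hcover : ∀ v : V, v ∈ A ∨ v ∈ B ∨ v ∈ C)
    (hAB : Disjoint A B) (hAC : Disjoint A C) (hBC : Disjoint B C)
    (H : Finset (Finset V))
    (hcard : ∀ e ∈ H, e.card = 3)
    (hparts : ∀ e ∈ H, (e ∩ A).card = 1 ∧ (e ∩ B).card = 1 ∧ (e ∩ C).card = 1)
    (hlin : ∀ e₁ ∈ H, ∀ e₂ ∈ H, e₁ ≠ e₂ → (e₁ ∩ e₂).card ≤ 1)
    (e₁ e₂ e₃ : Finset V) (h₁ : e₁ ∈ H) (h₂ : e₂ ∈ H) (h₃ : e₃ ∈ H)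
    (h12 : e₁ ≠ e₂) (h13 : e₁ ≠ e₃) (h23 : e₂ ≠ e₃)
    (hU : (e₁ ∪ e₂ ∪ e₃).card ≤ 6) :
    (e₁ ∪ e₂ ∪ e₃).card = 6 ∧
    ∃ x y z : V, e₁ ∩ e₂ = {x} ∧ e₂ ∩ e₃ = {y} ∧ e₁ ∩ e₃ = {z} ∧
      x ≠ y ∧ x ≠ z ∧ y ≠ z ∧
      ((x ∈ A ∧ y ∈ B ∧ z ∈ C) ∨ (x ∈ A ∧ y ∈ C ∧ z ∈ B) ∨
       (x ∈ B ∧ y ∈ A ∧ z ∈ C) ∨ (x ∈ B ∧ y ∈ C ∧ z ∈ A) ∨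
       (x ∈ C ∧ y ∈ A ∧ z ∈ B) ∨ (x ∈ C ∧ y ∈ B ∧ z ∈ A)) := by
  have c1 := hcard _ h₁
  have c2 := hcard _ h₂
  have c3 := hcard _ h₃
  have l12 := hlin _ h₁ _ h₂ h12
  have l13 := hlin _ h₁ _ h₃ h13
  have l23 := hlin _ h₂ _ h₃ h23
  have u12 := Finset.card_union_add_card_inter e₁ e₂
  have u123 := Finset.card_union_add_card_inter (e₁ ∪ e₂) e₃
  have ut := Finset.card_union_add_card_inter (e₁ ∩ e₃) (e₂ ∩ e₃)
  rw [← Finset.union_inter_distrib_right] at ut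
  obtain ⟨x, hx⟩ := Finset.card_eq_one.mp (show (e₁ ∩ e₂).card = 1 by omega)
  obtain ⟨y, hy⟩ := Finset.card_eq_one.mp (show (e₂ ∩ e₃).card = 1 by omega)
  obtain ⟨z, hz⟩ := Finset.card_eq_one.mp (show (e₁ ∩ e₃).card = 1 by omega)
  have ht : (e₁ ∩ e₃) ∩ (e₂ ∩ e₃) = ∅ :=
    Finset.card_eq_zero.mp (by omega)
  have no_common : ∀ v, v ∈ e₁ → v ∈ e₂ → v ∈ e₃ → False := fun v m1 m2 m3 =>
    Finset.notMem_empty v (ht ▸ by simp [m1, m2, m3])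
  obtain ⟨x1, x2⟩ := Finset.mem_inter.mp (hx ▸ Finset.mem_singleton_self x)
  obtain ⟨y2, y3⟩ := Finset.mem_inter.mp (hy ▸ Finset.mem_singleton_self y)
  obtain ⟨z1, z3⟩ := Finset.mem_inter.mp (hz ▸ Finset.mem_singleton_self z)
  have hxy : x ≠ y := fun h => no_common x x1 x2 (h ▸ y3)
  have hxz : x ≠ z := fun h => no_common x x1 x2 (h ▸ z3)
  have hyz : y ≠ z := fun h => no_common y (h ▸ z1) y2 y3
  have part_unique : ∀ {e P : Finset V}, (e ∩ P).card = 1 → ∀ {u v : V}, u ∈ e → v ∈ e →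
      u ≠ v → ¬ (u ∈ P ∧ v ∈ P) := fun h _ _ hu hv huv hP =>
    huv (Finset.card_le_one.mp h.le _ (Finset.mem_inter.mpr ⟨hu, hP.1⟩) _
      (Finset.mem_inter.mpr ⟨hv, hP.2⟩))
  obtain ⟨pA1, pB1, pC1⟩ := hparts _ h₁
  obtain ⟨pA2, pB2, pC2⟩ := hparts _ h₂
  obtain ⟨pA3, pB3, pC3⟩ := hparts _ h₃
  have xyA := part_unique pA2 x2 y2 hxy
  have xyB := part_unique pB2 x2 y2 hxy
  have xyC := part_unique pC2 x2 y2 hxy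
  have xzA := part_unique pA1 x1 z1 hxz
  have xzB := part_unique pB1 x1 z1 hxz
  have xzC := part_unique pC1 x1 z1 hxz
  have yzA := part_unique pA3 y3 z3 hyz
  have yzB := part_unique pB3 y3 z3 hyz
  have yzC := part_unique pC3 y3 z3 hyz
  refine ⟨by omega, x, y, z, hx, hy, hz, hxy, hxz, hyz, ?_⟩
  have vx := hcover x
  have vy := hcover y
  have vz := hcover z
  clear * - xyA xyB xyC xzA xzB xzC yzA yzB yzC vx vy vz
  grind
end
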